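/- arXiv:1004.4980 — 3 statements merged into one kernel-verified Lean document; each statement's English description precedes it below -/
import Mathlib

section
/- If G is a tree, then gdim(G) = ν(G) + 1, where ν(G) is the matching number of G; consequently the Krull dimension of the symbolic fiber cone satisfies dim Ā(G) = ν(G) + 1. -/
open MvPolynomial

/-- A `k`-cover of a graph `G`. -/
def IsCover {n : ℕ} (G : SimpleGraph (Fin n)) (k : ℕ) (α : Fin n → ℕ) : Prop :=
  ∀ ⦃i j : Fin n⦄, G.Adj i j → k ≤ α i + α j

/-- A basic `k`-cover. -/
def IsBasicCover {n : ℕ} (G : SimpleGraph (Fin n)) (k : ℕ) (α : Fin n → ℕ) : Prop :=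
  IsCover G k α ∧ ∀ β : Fin n → ℕ, β ≤ α → IsCover G k β → β = α

/-- The polynomial ring `S[t] = K[x_1,…,x_n][t]`, realised as a polynomial ring in the
variables `some i ↦ x_i` and `none ↦ t`. -/
abbrev St (K : Type*) [Field K] (n : ℕ) := MvPolynomial (Option (Fin n)) K

/-- The element `x₁^{α 1} ⋯ x_n^{α n} · t^k` of `S[t]`. -/
noncomputable def coverMonomial (K : Type*) [Field K] {n : ℕ} (α : Fin n → ℕ) (k : ℕ) :
    St K n :=
  MvPolynomial.monomial (Finsupp.equivFunOnFinite.symm (fun o => o.elim k α)) 1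

/-- The symbolic Rees algebra `A(G) = ⊕_k J(G)^{(k)} t^k = K[x^α t^k : α a k-cover]` of the
cover ideal of `G`, as a subalgebra of `S[t]`. -/
noncomputable def symbolicRees (K : Type*) [Field K] {n : ℕ} (G : SimpleGraph (Fin n)) :
    Subalgebra K (St K n) :=
  Algebra.adjoin K {p | ∃ k : ℕ, ∃ α : Fin n → ℕ, IsCover G k α ∧ p = coverMonomial K α k}

/-- The ideal `m·A(G)` of `A(G)`, generated by the variables `x_i = x_i t^0`. -/
noncomputable def irrelevantIdeal (K : Type*) [Field K] {n : ℕ} (G : SimpleGraph (Fin n)) :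
    Ideal (symbolicRees K G) :=
  Ideal.span {a : symbolicRees K G | ∃ i : Fin n, (a : St K n) = MvPolynomial.X (some i)}

/-- The symbolic fiber cone `Ā(G) = A(G)/mA(G)` of the cover ideal of `G`. -/
noncomputable def symbolicFiberCone (K : Type*) [Field K] {n : ℕ}
    (G : SimpleGraph (Fin n)) : Type _ :=
  symbolicRees K G ⧸ irrelevantIdeal K G

noncomputable instance (K : Type*) [Field K] {n : ℕ} (G : SimpleGraph (Fin n)) :
    CommRing (symbolicFiberCone K G) :=
  Ideal.Quotient.commRing (irrelevantIdeal K G)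

/-- A free parameter pair. -/
def IsFreeParameterPair {n r : ℕ} (G : SimpleGraph (Fin n)) (a b : Fin r → Fin n) : Prop :=
  Function.Injective a ∧ Function.Injective b ∧
  (∀ i j : Fin r, ¬ G.Adj (a i) (a j)) ∧
  (∀ i j : Fin r, a i ≠ b j) ∧
  (∀ i : Fin r, G.Adj (a i) (b i)) ∧
  (∀ i j : Fin r, G.Adj (a i) (b j) → i ≤ j)

/-- `G` has a free parameter set of cardinality `r`. -/
def HasFreeParameterSet {n : ℕ} (G : SimpleGraph (Fin n)) (r : ℕ) : Prop :=
  ∃ a b : Fin r → Fin n, IsFreeParameterPair G a b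

/-- The graphical dimension. -/
noncomputable def gdim {n : ℕ} (G : SimpleGraph (Fin n)) : ℕ :=
  sSup {r : ℕ | HasFreeParameterSet G r} + 1

/-- `G` has a matching of `r` pairwise disjoint edges. -/
def HasMatchingOfSize {n : ℕ} (G : SimpleGraph (Fin n)) (r : ℕ) : Prop :=
  ∃ e : Fin r → Fin n × Fin n, (∀ i, G.Adj (e i).1 (e i).2) ∧
    ∀ i j : Fin r, i ≠ j →
      (e i).1 ≠ (e j).1 ∧ (e i).1 ≠ (e j).2 ∧ (e i).2 ≠ (e j).1 ∧ (e i).2 ≠ (e j).2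

/-- The matching number `ν(G)`. -/
noncomputable def matchingNumber {n : ℕ} (G : SimpleGraph (Fin n)) : ℕ :=
  sSup {r : ℕ | HasMatchingOfSize G r}

/-!
`Ā(G)` is the algebra of the monoid of covers modulo the monomial ideal of the variables. The
covers outside that ideal are basic, and a basic `k`-cover takes values at most `k` and is
determined by its values on a vertex cover `C`; so the part of degree at most `k` has dimension at
most `(k + 1) ^ (|C| + 1)`. A chain of primes of length `m` yields `m` algebraically independent
elements, which is too much for this growth unless `m ≤ |C| + 1`. Conversely, a free parameter set
of size `r` gives a basic `(2r + 1)`-cover `α` taking the values `r, r - 1, …, 1` on it. The covers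
that vanish wherever `α` does and are tight wherever `α` is form a face avoiding the variables, and
rounding `α` at symmetric thresholds produces `r + 1` independent elements of this face, whence a
chain of monomial primes of length `r + 1`.

Since `|A₀| ≤ ν(G) ≤ |C|` for every free parameter set `A₀` and every vertex cover `C`, it is
enough that a forest has a free parameter set with a partner set that is a vertex cover: strip off
the neighbour `p` of a leaf `l`, and append `l` and `p` to the sets obtained for the rest.
-/

section GrowthBound

variable {m d : ℕ}

theorem aeval_cons_eq_eval₂_finSuccEquiv {K R : Type*} [CommSemiring K] [CommSemiring R]
    [Algebra K R] (x : R) (y : Fin m → R)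
    (p : MvPolynomial (Fin (m + 1)) K) :
    aeval (Fin.cons x y : Fin (m + 1) → R) p =
      (finSuccEquiv K m p).eval₂ (aeval y : MvPolynomial (Fin m) K →ₐ[K] R).toRingHom x := by
  induction p using MvPolynomial.induction_on with
  | C c => simp [finSuccEquiv_apply]
  | add p q hp hq => simp only [map_add, hp, hq, Polynomial.eval₂_add]
  | mul_X p i hp =>
    rw [map_mul, map_mul, Polynomial.eval₂_mul, hp]
    refine congrArg _ (Fin.cases ?_ (fun j => ?_) i) <;> simp [finSuccEquiv_apply]

theorem comap_aeval_cons_eq_bot {K R : Type*} [CommRing K] [CommRing R] [Algebra K R]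
    {P Q : Ideal R} [P.IsPrime] (hPQ : P ≤ Q) {x : R} (hxQ : x ∈ Q) (hxP : x ∉ P) {y : Fin m → R}
    (hy : Q.comap (aeval y : MvPolynomial (Fin m) K →ₐ[K] R) = ⊥) :
    P.comap (aeval (Fin.cons x y) : MvPolynomial (Fin (m + 1)) K →ₐ[K] R) = ⊥ := by
  set φ : MvPolynomial (Fin m) K →+* R := (aeval y : MvPolynomial (Fin m) K →ₐ[K] R).toRingHom
  replace hy : Q.comap φ = ⊥ := hy
  have hyP : P.comap φ = ⊥ := le_bot_iff.1 ((Ideal.comap_mono hPQ).trans hy.le)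
  rw [eq_bot_iff]
  intro p hp
  rw [Ideal.mem_comap, aeval_cons_eq_eval₂_finSuccEquiv] at hp
  by_contra hne
  have hpmap : (finSuccEquiv K m p).map (Ideal.Quotient.mk (P.comap φ)) ≠ 0 := by
    rw [Ne, Polynomial.map_eq_zero_iff]
    · simpa using hne
    · rw [RingHom.injective_iff_ker_eq_bot, Ideal.mk_ker, hyP]
  -- As `x ∈ Q` and `x ∉ P`, a relation for `x` modulo `P` has a coefficient in `Q` but not in `P`.
  obtain ⟨i, hi, hi'⟩ :=
    Ideal.exists_coeff_mem_comap_sdiff_comap_of_root_mem_sdiff hPQ ⟨hxQ, hxP⟩ hpmap hp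
  rw [hy] at hi
  rw [hyP] at hi'
  exact hi' hi

variable {K R : Type*} [Field K] [CommRing R] [Algebra K R]

variable (K) in
theorem exists_algebraicIndependent_of_strictMono_prime {P : Fin (m + 1) → Ideal R}
    (hprime : ∀ i, (P i).IsPrime) (hP : StrictMono P) :
    ∃ x : Fin m → R, AlgebraicIndependent K x := by
  suffices h : ∃ x : Fin m → R,
      (P 0).comap (aeval x : MvPolynomial (Fin m) K →ₐ[K] R) = ⊥ by
    obtain ⟨x, hx⟩ := h
    refine ⟨x, (injective_iff_map_eq_zero _).2 fun p hp => ?_⟩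
    rw [← Ideal.mem_bot, ← hx, Ideal.mem_comap, hp]
    exact zero_mem _
  induction m with
  | zero =>
    refine ⟨Fin.elim0, eq_bot_iff.2 fun p hp => ?_⟩
    rw [Ideal.mem_comap, eq_C_of_isEmpty p, aeval_C] at hp
    have hcoeff : coeff 0 p = 0 := by
      by_contra hne
      exact (hprime 0).ne_top (Ideal.eq_top_of_isUnit_mem _ hp ((Ne.isUnit hne).map _))
    rw [Ideal.mem_bot, eq_C_of_isEmpty p, hcoeff, C_0]
  | succ m ih =>
    obtain ⟨y, hy⟩ := ih (fun i => hprime i.succ) (hP.comp Fin.strictMono_succ)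
    obtain ⟨x, hxQ, hxP⟩ := Set.exists_of_ssubset (hP (Fin.succ_pos 0))
    exact ⟨Fin.cons x y, comap_aeval_cons_eq_bot (hP (Fin.succ_pos 0)).le hxQ hxP hy⟩

theorem le_of_forall_add_one_pow_le {c : ℕ} (h : ∀ N, (N + 1) ^ m ≤ (c * N + 1) ^ d) : m ≤ d := by
  by_contra! hlt
  let M := (c + 1) ^ d
  have hM : (M + 1) ^ d * (M + 1) ≤ (M + 1) ^ d * M :=
    calc (M + 1) ^ d * (M + 1) = (M + 1) ^ (d + 1) := (pow_succ _ _).symm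
      _ ≤ (M + 1) ^ m := Nat.pow_le_pow_right M.succ_pos hlt
      _ ≤ (c * M + 1) ^ d := h M
      _ ≤ ((M + 1) * (c + 1)) ^ d := Nat.pow_le_pow_left (by nlinarith) d
      _ = (M + 1) ^ d * M := mul_pow _ _ _
  exact M.lt_irrefl (Nat.le_of_mul_le_mul_left hM (by positivity))

variable {V : ℕ → Submodule K R} [SetLike.GradedMonoid V] [∀ k, Module.Finite K (V k)]

theorem card_le_of_algebraicIndependent_of_finrank_le_pow (hmono : Monotone V)
    (hexh : ∀ x, ∃ k, x ∈ V k) (hrank : ∀ k, Module.finrank K (V k) ≤ (k + 1) ^ d)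
    {x : Fin m → R} (hx : AlgebraicIndependent K x) : m ≤ d := by
  choose k hk using fun i => hexh (x i)
  refine le_of_forall_add_one_pow_le (c := ∑ i, k i) fun N => ?_
  let e : (Fin m → Fin (N + 1)) → Fin m →₀ ℕ := fun a =>
    Finsupp.equivFunOnFinite.symm fun i => (a i : ℕ)
  have he : Function.Injective e := Finsupp.equivFunOnFinite.symm.injective.comp
    Fin.val_injective.comp_left
  have hmem (a) : aeval x (monomial (e a) (1 : K)) ∈ V ((∑ i, k i) * N) := by
    have hprod : aeval x (monomial (e a) (1 : K)) = ∏ i, x i ^ (a i : ℕ) := by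
      rw [aeval_monomial, map_one, one_mul, Finsupp.prod_fintype _ _ fun i => pow_zero _]
      rfl
    have hdeg : ∑ i, (a i : ℕ) • k i ≤ (∑ i, k i) * N := by
      rw [Finset.sum_mul]
      exact Finset.sum_le_sum fun i _ =>
        (mul_comm _ _).trans_le (Nat.mul_le_mul_left _ (a i).is_le)
    rw [hprod]
    exact hmono hdeg (SetLike.prod_pow_mem_graded V k x (fun i => (a i : ℕ)) fun i _ => hk i)
  have hli : LinearIndependent K fun a =>
      (⟨aeval x (monomial (e a) (1 : K)), hmem a⟩ : V ((∑ i, k i) * N)) := by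
    refine LinearIndependent.of_comp (V _).subtype ?_
    exact ((basisMonomials (Fin m) K).linearIndependent.comp e he).map' (aeval x).toLinearMap
      (LinearMap.ker_eq_bot.2 hx)
  calc (N + 1) ^ m = Fintype.card (Fin m → Fin (N + 1)) := by simp
    _ ≤ Module.finrank K (V ((∑ i, k i) * N)) := hli.fintype_card_le_finrank
    _ ≤ _ := hrank _

theorem ringKrullDim_le_of_finrank_le_pow (hmono : Monotone V) (hexh : ∀ x, ∃ k, x ∈ V k)
    (hrank : ∀ k, Module.finrank K (V k) ≤ (k + 1) ^ d) : ringKrullDim R ≤ d := by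
  refine iSup_le fun l => ?_
  obtain ⟨x, hx⟩ := exists_algebraicIndependent_of_strictMono_prime K
    (P := fun i => (l i).asIdeal) (fun i => (l i).isPrime) l.strictMono
  exact_mod_cast card_le_of_algebraicIndependent_of_finrank_le_pow hmono hexh hrank hx

end GrowthBound

section MonomialQuotients

open scoped AddMonoidAlgebra Pointwise
open AddMonoidAlgebra

variable (K : Type*) [CommRing K] {M : Type*} [AddCommMonoid M]

/-- The ideal of `K[M]` generated by the monomials with exponent in `E`. -/
noncomputable def monomialIdeal (E : Set M) : Ideal K[M] :=
  Ideal.span (Set.image (of' K M) E)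

/-- The class of the monomial with exponent `s` modulo the monomials with exponent in `E`. -/
noncomputable def monomialClass (E : Set M) (s : M) : K[M] ⧸ monomialIdeal K E :=
  Ideal.Quotient.mk _ (of' K M s)

/-- The filtration of `K[M] ⧸ monomialIdeal K E` by degree: the `k`-th step is spanned by the
classes of the monomials of degree at most `k`. -/
noncomputable def degreeFiltration (E : Set M) (deg : M →+ ℕ) (k : ℕ) :
    Submodule K (K[M] ⧸ monomialIdeal K E) :=
  Submodule.span K (monomialClass K E '' {s | deg s ≤ k})

variable {E : Set M} {deg : M →+ ℕ} {d : ℕ}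

theorem monomialClass_add (s t : M) :
    monomialClass K E (s + t) = monomialClass K E s * monomialClass K E t := by
  simp only [monomialClass, of', ← map_mul, single_mul_single, mul_one]

theorem monomialClass_eq_zero {s : M} (hs : s ∈ E + Set.univ) : monomialClass K E s = 0 := by
  obtain ⟨e, he, t, -, rfl⟩ := hs
  have hzero : monomialClass K E e = 0 :=
    Ideal.Quotient.eq_zero_iff_mem.2 (Ideal.subset_span ⟨e, he, rfl⟩)
  change monomialClass K E (e + t) = 0
  rw [monomialClass_add, hzero, zero_mul]

instance : SetLike.GradedMonoid (degreeFiltration K E deg) where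
  one_mem := Submodule.subset_span ⟨0, (map_zero deg).le, rfl⟩
  mul_mem i j x y hx hy := by
    have hxy := Submodule.mul_mem_mul hx hy
    rw [degreeFiltration, degreeFiltration, Submodule.span_mul_span] at hxy
    refine Submodule.span_mono ?_ hxy
    rintro _ ⟨_, ⟨s, hs, rfl⟩, _, ⟨t, ht, rfl⟩, rfl⟩
    exact ⟨s + t, (map_add deg s t).trans_le (add_le_add hs ht), monomialClass_add K s t⟩

theorem degreeFiltration_mono : Monotone (degreeFiltration K E deg) := fun _ _ hij =>
  Submodule.span_mono (Set.image_mono fun _ hs => le_trans hs hij)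

variable (deg) in
theorem exists_mem_degreeFiltration (x : K[M] ⧸ monomialIdeal K E) :
    ∃ k, x ∈ degreeFiltration K E deg k := by
  obtain ⟨x, rfl⟩ := Ideal.Quotient.mk_surjective x
  induction x using AddMonoidAlgebra.induction_on with
  | of s => exact ⟨deg s, Submodule.subset_span ⟨s, le_refl (deg s), rfl⟩⟩
  | add x y hx hy =>
    obtain ⟨i, hi⟩ := hx
    obtain ⟨j, hj⟩ := hy
    exact ⟨max i j, add_mem (degreeFiltration_mono K (le_max_left i j) hi)
      (degreeFiltration_mono K (le_max_right i j) hj)⟩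
  | smul c x hx => exact hx.imp fun k hk => Submodule.smul_mem _ c hk

theorem degreeFiltration_le_span (k : ℕ) : degreeFiltration K E deg k ≤
    Submodule.span K (monomialClass K E '' ({s | deg s ≤ k} \ (E + Set.univ))) := by
  refine Submodule.span_le.2 ?_
  rintro _ ⟨s, hs, rfl⟩
  by_cases hsE : s ∈ E + Set.univ
  · rw [monomialClass_eq_zero K hsE]
    exact zero_mem _
  · exact Submodule.subset_span ⟨s, ⟨hs, hsE⟩, rfl⟩

theorem ringKrullDim_quotient_monomialIdeal_le (K : Type*) [Field K]
    (h : ∀ k, ({s | deg s ≤ k} \ (E + Set.univ)).encard ≤ ((k + 1) ^ d : ℕ)) :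
    ringKrullDim (K[M] ⧸ monomialIdeal K E) ≤ d := by
  have hfin (k) : ({s | deg s ≤ k} \ (E + Set.univ)).Finite := Set.finite_of_encard_le_coe (h k)
  have hspan (k) := Module.Finite.span_of_finite K ((hfin k).image (monomialClass K E))
  have hV (k) : Module.Finite K (degreeFiltration K E deg k) :=
    Submodule.finiteDimensional_of_le (degreeFiltration_le_span K k)
  refine ringKrullDim_le_of_finrank_le_pow (degreeFiltration_mono K (deg := deg))
    (exists_mem_degreeFiltration K deg) fun k => ?_
  have := ((hfin k).image (monomialClass K E)).fintype
  calc Module.finrank K (degreeFiltration K E deg k)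
      ≤ (monomialClass K E '' ({s | deg s ≤ k} \ (E + Set.univ))).toFinset.card :=
        (Submodule.finrank_mono (degreeFiltration_le_span K k)).trans (finrank_span_le_card _)
    _ = (monomialClass K E '' ({s | deg s ≤ k} \ (E + Set.univ))).ncard :=
        (Set.ncard_eq_toFinset_card' _).symm
    _ ≤ ({s | deg s ≤ k} \ (E + Set.univ)).ncard := Set.ncard_image_le (hfin k)
    _ ≤ (k + 1) ^ d := ENat.toNat_le_of_le_natCast (h k)

end MonomialQuotients

section Faces

open scoped AddMonoidAlgebra
open AddMonoidAlgebra

variable (K : Type*) [CommRing K] {M : Type*} [AddCommMonoid M]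

/-- A face of a commutative monoid: a submonoid containing both summands of each sum it contains. -/
def IsFace (F : AddSubmonoid M) : Prop :=
  ∀ ⦃s t : M⦄, s + t ∈ F → s ∈ F

theorem isFace_mker (φ : M →+ ℕ) : IsFace (AddMonoidHom.mker φ) := fun s t hst => by
  rw [AddMonoidHom.mem_mker, map_add] at hst
  exact Nat.eq_zero_of_add_eq_zero_right hst

theorem IsFace.inf {F F' : AddSubmonoid M} (hF : IsFace F) (hF' : IsFace F') : IsFace (F ⊓ F') :=
  fun _ _ hst => ⟨hF hst.1, hF' hst.2⟩

theorem IsFace.iInf {ι : Sort*} {F : ι → AddSubmonoid M} (hF : ∀ i, IsFace (F i)) :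
    IsFace (⨅ i, F i) := fun _ _ hst => by
  rw [AddSubmonoid.mem_iInf] at hst ⊢
  exact fun i => hF i (hst i)

variable {F F' : AddSubmonoid M}

open Classical in
/-- The endomorphism of `K[M]` that fixes the monomials with exponent in the face `F` and kills
all the others. -/
noncomputable def faceProjection (hF : IsFace F) : K[M] →ₐ[K] K[M] :=
  AddMonoidAlgebra.lift K K[M] M
    { toFun s := if s.toAdd ∈ F then of' K M s.toAdd else 0
      map_one' := if_pos F.zero_mem
      map_mul' s t := by
        by_cases hst : s.toAdd + t.toAdd ∈ F
        · have ht : t.toAdd ∈ F := hF (add_comm s.toAdd t.toAdd ▸ hst)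
          simp [hst, hF hst, ht, single_mul_single]
        · by_cases hs : s.toAdd ∈ F
          · have ht : t.toAdd ∉ F := fun ht => hst (F.add_mem hs ht)
            simp [hst, ht]
          · simp [hst, hs] }

theorem faceProjection_of_mem (hF : IsFace F) {s : M} (hs : s ∈ F) :
    faceProjection K hF (of' K M s) = of' K M s := by
  simp [faceProjection, hs]

theorem faceProjection_of_notMem (hF : IsFace F) {s : M} (hs : s ∉ F) :
    faceProjection K hF (of' K M s) = 0 := by
  simp [faceProjection, hs]

theorem faceProjection_comp_of_le (hF : IsFace F) (hF' : IsFace F') (h : F ≤ F') :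
    (faceProjection K hF).comp (faceProjection K hF') = faceProjection K hF := by
  refine AddMonoidAlgebra.algHom_ext (fun s => ?_) (Subsingleton.elim _ _)
  change faceProjection K hF (faceProjection K hF' (of' K M s)) = faceProjection K hF (of' K M s)
  by_cases hs : s ∈ F'
  · rw [faceProjection_of_mem K hF' hs]
  · rw [faceProjection_of_notMem K hF' hs, faceProjection_of_notMem K hF (mt (@h s) hs), map_zero]

/-- The ideal of `K[M]` spanned by the monomials with exponent outside the face `F`, obtained as the
kernel of the projection onto the other monomials. -/
noncomputable def faceIdeal (hF : IsFace F) : Ideal K[M] :=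
  RingHom.ker (faceProjection K hF)

theorem of'_mem_faceIdeal_iff [Nontrivial K] (hF : IsFace F) {s : M} :
    of' K M s ∈ faceIdeal K hF ↔ s ∉ F := by
  rw [faceIdeal, RingHom.mem_ker]
  by_cases hs : s ∈ F
  · rw [faceProjection_of_mem K hF hs]
    exact iff_of_false (single_ne_zero.2 one_ne_zero) (not_not_intro hs)
  · exact iff_of_true (faceProjection_of_notMem K hF hs) hs

theorem faceIdeal_lt_faceIdeal [Nontrivial K] (hF : IsFace F) (hF' : IsFace F') (h : F < F') :
    faceIdeal K hF' < faceIdeal K hF := by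
  refine lt_of_le_of_ne (fun x hx => ?_) fun heq => ?_
  · rw [faceIdeal, RingHom.mem_ker] at hx ⊢
    rw [← faceProjection_comp_of_le K hF hF' h.le, AlgHom.comp_apply, hx, map_zero]
  · obtain ⟨s, hs', hs⟩ := Set.exists_of_ssubset h
    exact (of'_mem_faceIdeal_iff K hF').1 (heq ▸ (of'_mem_faceIdeal_iff K hF).2 hs) hs'

theorem monomialIdeal_le_faceIdeal (hF : IsFace F) {E : Set M} (hE : Disjoint E F) :
    monomialIdeal K E ≤ faceIdeal K hF := by
  refine Ideal.span_le.2 ?_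
  rintro _ ⟨e, he, rfl⟩
  exact faceProjection_of_notMem K hF (Set.disjoint_left.1 hE he)

variable [IsDomain K] [UniqueSums M]

instance (hF : IsFace F) : (faceIdeal K hF).IsPrime :=
  RingHom.ker_isPrime _

theorem le_ringKrullDim_quotient_monomialIdeal_of_strictMono {E : Set M} {m : ℕ}
    {F : Fin (m + 1) → AddSubmonoid M} (hface : ∀ j, IsFace (F j)) (hF : StrictMono F)
    (hE : ∀ j, Disjoint E (F j)) : m ≤ ringKrullDim (K[M] ⧸ monomialIdeal K E) := by
  rw [ringKrullDim_quotient, Order.le_krullDim_iff]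
  exact ⟨LTSeries.mk m (fun j => ⟨⟨faceIdeal K (hface j.rev), inferInstance⟩,
    monomialIdeal_le_faceIdeal K (hface j.rev) (hE j.rev)⟩) fun i j hij =>
      faceIdeal_lt_faceIdeal K _ _ (hF (Fin.rev_lt_rev.2 hij)), rfl⟩

theorem le_ringKrullDim_quotient_monomialIdeal_of_triangular {E : Set M} {m : ℕ}
    (hF : IsFace F) (hE : Disjoint E F) {c : Fin m → M} (hc : ∀ j, c j ∈ F) {φ : Fin m → M →+ ℕ}
    (hzero : ∀ i j, j < i → φ i (c j) = 0) (hne : ∀ i, φ i (c i) ≠ 0) :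
    m ≤ ringKrullDim (K[M] ⧸ monomialIdeal K E) := by
  let H : Fin (m + 1) → AddSubmonoid M := fun j =>
    F ⊓ ⨅ i : Fin m, ⨅ _ : j ≤ i.castSucc, AddMonoidHom.mker (φ i)
  have mem_H {j s} : s ∈ H j ↔ s ∈ F ∧ ∀ i : Fin m, j ≤ i.castSucc → φ i s = 0 := by
    simp only [H, AddSubmonoid.mem_inf, AddSubmonoid.mem_iInf, AddMonoidHom.mem_mker]
  refine le_ringKrullDim_quotient_monomialIdeal_of_strictMono K (F := H)
    (fun j => hF.inf (IsFace.iInf fun i => IsFace.iInf fun _ => isFace_mker (φ i)))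
    (Fin.strictMono_iff_lt_succ.2 fun j => ?_) fun j => hE.mono_right fun s hs => (mem_H.1 hs).1
  refine lt_of_le_of_ne (fun s hs => ?_) fun heq => ?_
  · exact mem_H.2 ⟨(mem_H.1 hs).1, fun i hi =>
      (mem_H.1 hs).2 i ((Fin.castSucc_le_succ j).trans hi)⟩
  · have hmem : c j ∈ H j.succ :=
      mem_H.2 ⟨hc j, fun i hi => hzero i j (Fin.succ_le_castSucc_iff.1 hi)⟩
    exact hne j ((mem_H.1 (heq ▸ hmem)).2 j le_rfl)

end Faces

section CoverMonoid

open scoped AddMonoidAlgebra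
open AddMonoidAlgebra

variable (K : Type*) [Field K] {n : ℕ} (G : SimpleGraph (Fin n))

/-- The monoid of all covers of `G`, a `k`-cover `α` being encoded as the pair `(k, α)`. -/
def coverMonoid : AddSubmonoid (ℕ × (Fin n → ℕ)) where
  carrier := {s | IsCover G s.1 s.2}
  zero_mem' _ _ _ := Nat.zero_le _
  add_mem' {s t} hs ht i j hij := by
    have := hs hij
    have := ht hij
    simp only [Prod.fst_add, Prod.snd_add, Pi.add_apply]
    omega

instance : UniqueSums (coverMonoid G) :=
  UniqueSums.of_injective_addHom ((coverMonoid G).subtype : coverMonoid G →ₙ+ ℕ × (Fin n → ℕ))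
    Subtype.val_injective inferInstance

/-- The degree `k` of a `k`-cover. -/
def coverDegree : coverMonoid G →+ ℕ :=
  (AddMonoidHom.fst _ _).comp (coverMonoid G).subtype

/-- The value of a cover at the vertex `v`. -/
def coverValue (v : Fin n) : coverMonoid G →+ ℕ :=
  ((Pi.evalAddMonoidHom _ v).comp (AddMonoidHom.snd _ _)).comp (coverMonoid G).subtype

/-- The `0`-cover that is the exponent of the variable `x_v`. -/
def coverVariable (v : Fin n) : coverMonoid G :=
  ⟨(0, Pi.single v 1), fun _ _ _ => Nat.zero_le _⟩

/-- The exponent of `x^α t^k`, with the variables indexed as in `St`. -/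
noncomputable def coverExponent (n : ℕ) : ℕ × (Fin n → ℕ) →+ Option (Fin n) →₀ ℕ where
  toFun s := Finsupp.equivFunOnFinite.symm fun o => o.elim s.1 s.2
  map_zero' := by ext (_ | v) <;> rfl
  map_add' s t := by ext (_ | v) <;> rfl

theorem coverExponent_injective (n : ℕ) : Function.Injective (coverExponent n) := fun _ _ hst =>
  Prod.ext (DFunLike.congr_fun hst none) (funext fun v => DFunLike.congr_fun hst (some v))

/-- The inclusion of the monoid algebra of covers into `S[t]`. -/
noncomputable def coverAlgebraHom : K[coverMonoid G] →ₐ[K] St K n :=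
  mapDomainAlgHom K K ((coverExponent n).comp (coverMonoid G).subtype)

theorem coverAlgebraHom_of' (s : coverMonoid G) :
    coverAlgebraHom K G (of' K _ s) = coverMonomial K s.1.2 s.1.1 :=
  mapDomain_single

theorem coverAlgebraHom_injective : Function.Injective (coverAlgebraHom K G) :=
  mapDomain_injective ((coverExponent_injective n).comp Subtype.val_injective)

theorem range_coverAlgebraHom : (coverAlgebraHom K G).range = symbolicRees K G := by
  refine le_antisymm ?_ (Algebra.adjoin_le ?_)
  · rintro _ ⟨x, rfl⟩
    induction x using AddMonoidAlgebra.induction_on with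
    | of s => exact coverAlgebraHom_of' K G s ▸ Algebra.subset_adjoin ⟨_, _, s.2, rfl⟩
    | add x y hx hy => exact map_add (coverAlgebraHom K G) x y ▸ add_mem hx hy
    | smul c x hx => exact map_smul (coverAlgebraHom K G) c x ▸ Subalgebra.smul_mem _ hx c
  · rintro _ ⟨k, α, hα, rfl⟩
    exact ⟨of' K _ ⟨(k, α), hα⟩, coverAlgebraHom_of' K G _⟩

/-- The symbolic Rees algebra is the monoid algebra of the covers. -/
noncomputable def coverAlgebraEquiv : K[coverMonoid G] ≃ₐ[K] symbolicRees K G :=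
  (AlgEquiv.ofInjective _ (coverAlgebraHom_injective K G)).trans
    (Subalgebra.equivOfEq _ _ (range_coverAlgebraHom K G))

theorem coe_coverAlgebraEquiv_coverVariable (v : Fin n) :
    (coverAlgebraEquiv K G (of' K _ (coverVariable G v)) : St K n) = X (some v) := by
  refine (coverAlgebraHom_of' K G _).trans (congrArg (monomial · 1) (Finsupp.ext ?_))
  rintro (_ | w)
  · simp [coverVariable]
  · simp [coverVariable, Pi.single_apply, Finsupp.single_apply, eq_comm]

theorem map_monomialIdeal_coverVariable :
    (monomialIdeal K (Set.range (coverVariable G))).map (coverAlgebraEquiv K G) =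
      irrelevantIdeal K G := by
  rw [monomialIdeal, Ideal.map_span, irrelevantIdeal]
  congr 1
  ext a
  simp only [← Set.range_comp, Set.mem_range, Set.mem_ofPred_eq]
  refine exists_congr fun v => ?_
  rw [← coe_coverAlgebraEquiv_coverVariable, eq_comm, Subtype.ext_iff]
  rfl

theorem ringKrullDim_symbolicFiberCone : ringKrullDim (symbolicFiberCone K G) =
    ringKrullDim (K[coverMonoid G] ⧸ monomialIdeal K (Set.range (coverVariable G))) :=
  (ringKrullDim_eq_of_ringEquiv (Ideal.quotientEquiv _ _ (coverAlgebraEquiv K G).toRingEquiv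
    (map_monomialIdeal_coverVariable K G).symm)).symm

end CoverMonoid

section UpperBound

open scoped Pointwise

variable {n : ℕ} {G : SimpleGraph (Fin n)} {k : ℕ} {α β : Fin n → ℕ}

theorem IsCover.mono (hα : IsCover G k α) (h : α ≤ β) : IsCover G k β := fun i j hij =>
  (hα hij).trans (add_le_add (h i) (h j))

theorem IsBasicCover.le (hα : IsBasicCover G k α) (v : Fin n) : α v ≤ k := by
  have hcover : IsCover G k (α ⊓ fun _ => k) := fun i j hij => by
    have := hα.1 hij
    simp only [Pi.inf_apply]
    omega
  exact inf_eq_left.1 (hα.2 _ inf_le_left hcover) v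

theorem IsBasicCover.eq_of_eqOn {C : Set (Fin n)} (hC : G.IsVertexCover C)
    (hα : IsBasicCover G k α) (hβ : IsBasicCover G k β) (h : Set.EqOn α β C) : α = β := by
  have hcover : IsCover G k (α ⊓ β) := fun i j hij => by
    have := hα.1 hij
    have := hβ.1 hij
    simp only [Pi.inf_apply]
    rcases hC hij with hi | hj
    · have := h hi
      omega
    · have := h hj
      omega
  exact (hα.2 _ inf_le_left hcover).symm.trans (hβ.2 _ inf_le_right hcover)

theorem isBasicCover_of_notMem {s : coverMonoid G}
    (hs : s ∉ Set.range (coverVariable G) + Set.univ) : IsBasicCover G s.1.1 s.1.2 := by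
  refine ⟨s.2, fun β hβ hcover => ?_⟩
  by_contra hne
  obtain ⟨v, hv⟩ := Function.ne_iff.1 hne
  have hpos : β v < s.1.2 v := lt_of_le_of_ne (hβ v) hv
  have hle : β ≤ s.1.2 - Pi.single v 1 := fun w => by
    rcases eq_or_ne w v with rfl | hw
    · simpa only [Pi.sub_apply, Pi.single_eq_same] using Nat.le_sub_one_of_lt hpos
    · simpa only [Pi.sub_apply, Pi.single_eq_of_ne hw, tsub_zero] using hβ w
  have hsingle : Pi.single v 1 ≤ s.1.2 :=
    update_le_iff.2 ⟨Nat.one_le_of_lt hpos, fun _ _ => Nat.zero_le _⟩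
  exact hs ⟨coverVariable G v, ⟨v, rfl⟩, ⟨(s.1.1, s.1.2 - Pi.single v 1), hcover.mono hle⟩,
    trivial, Subtype.ext (Prod.ext (zero_add _) (add_tsub_cancel_of_le hsingle))⟩

theorem encard_coverDegree_le_sdiff_le {C : Finset (Fin n)} (hC : G.IsVertexCover C) (k : ℕ) :
    ({s | coverDegree G s ≤ k} \ (Set.range (coverVariable G) + Set.univ)).encard ≤
      ((k + 1) ^ (C.card + 1) : ℕ) := by
  let f : coverMonoid G → ℕ × (C → ℕ) := fun s => (s.1.1, fun v => s.1.2 v)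
  let T := Finset.range (k + 1) ×ˢ Fintype.piFinset fun _ : C => Finset.range (k + 1)
  have hT : T.card = (k + 1) ^ (C.card + 1) := by
    simp only [T, Finset.card_product, Finset.card_range, Fintype.card_piFinset,
      Finset.prod_const, Finset.card_univ, Fintype.card_coe, pow_succ']
  rw [← hT, ← Set.encard_coe_eq_coe_finsetCard]
  refine Set.encard_le_encard_of_injOn (f := f) (fun s ⟨hk, hs⟩ => ?_) fun s hs t ht hst => ?_
  · simp only [T, f, Finset.coe_product, Set.mem_prod, Finset.mem_coe, Finset.mem_range_succ_iff,
      Fintype.mem_piFinset]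
    exact ⟨hk, fun v => ((isBasicCover_of_notMem hs).le v).trans hk⟩
  · obtain ⟨hdeg, hval⟩ := Prod.ext_iff.1 hst
    replace hdeg : s.1.1 = t.1.1 := hdeg
    replace hval : Set.EqOn s.1.2 t.1.2 C := fun v hv => congrFun hval ⟨v, hv⟩
    exact Subtype.ext (Prod.ext hdeg (IsBasicCover.eq_of_eqOn hC
      (hdeg ▸ isBasicCover_of_notMem hs.2) (isBasicCover_of_notMem ht.2) hval))

theorem ringKrullDim_symbolicFiberCone_le (K : Type*) [Field K] {C : Finset (Fin n)}
    (hC : G.IsVertexCover C) : ringKrullDim (symbolicFiberCone K G) ≤ (C.card + 1 : ℕ) :=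
  (ringKrullDim_symbolicFiberCone K G).trans_le
    (ringKrullDim_quotient_monomialIdeal_le K (encard_coverDegree_le_sdiff_le hC))

end UpperBound

section LowerBound

variable {n : ℕ} {G : SimpleGraph (Fin n)} {k r : ℕ} {α : Fin n → ℕ}

theorem IsCover.exists_isBasicCover_le (hα : IsCover G k α) : ∃ β ≤ α, IsBasicCover G k β := by
  obtain ⟨β, hle, hβ⟩ := exists_minimal_le_of_wellFoundedLT (IsCover G k) α hα
  exact ⟨β, hle, hβ.prop, fun γ hγ hcover => hβ.eq_of_le hcover hγ⟩

theorem IsBasicCover.exists_adj_add_eq (hα : IsBasicCover G k α) {v : Fin n} (hv : α v ≠ 0) :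
    ∃ w, G.Adj v w ∧ α v + α w = k := by
  by_contra! hslack
  have hslack_lt {w} (hw : G.Adj v w) : k < α v + α w := (hα.1 hw).lt_of_ne' (hslack w hw)
  have hcover : IsCover G k (α - Pi.single v 1) := fun i j hij => by
    have := hα.1 hij
    rcases eq_or_ne i v with rfl | hi
    · have := hslack_lt hij
      simp only [Pi.sub_apply, Pi.single_eq_same, Pi.single_eq_of_ne hij.ne']
      omega
    rcases eq_or_ne j v with rfl | hj
    · have := hslack_lt hij.symm
      simp only [Pi.sub_apply, Pi.single_eq_same, Pi.single_eq_of_ne hij.ne]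
      omega
    · simpa only [Pi.sub_apply, Pi.single_eq_of_ne hi, Pi.single_eq_of_ne hj, tsub_zero]
  have heq := congrFun (hα.2 _ tsub_le_self hcover) v
  simp only [Pi.sub_apply, Pi.single_eq_same] at heq
  omega

variable (G k α) in
/-- The covers that vanish where the `k`-cover `α` does and are tight on every edge on which `α` is
tight. -/
def tightFace : AddSubmonoid (coverMonoid G) where
  carrier := {s | (∀ v, α v = 0 → s.1.2 v = 0) ∧
    ∀ u v, G.Adj u v → α u + α v = k → s.1.2 u + s.1.2 v = s.1.1}
  zero_mem' := ⟨fun _ _ => rfl, fun _ _ _ _ => rfl⟩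
  add_mem' {s t} hs ht := by
    refine ⟨fun v hv => ?_, fun u v huv htight => ?_⟩
    · simp [hs.1 v hv, ht.1 v hv]
    · simp only [AddSubmonoid.coe_add, Prod.fst_add, Prod.snd_add, Pi.add_apply,
        ← hs.2 u v huv htight, ← ht.2 u v huv htight]
      exact add_add_add_comm _ _ _ _

theorem isFace_tightFace : IsFace (tightFace G k α) := fun s t hst => by
  refine ⟨fun v hv => Nat.eq_zero_of_add_eq_zero_right (hst.1 v hv), fun u v huv htight => ?_⟩
  have := s.2 huv
  have := t.2 huv
  have := hst.2 u v huv htight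
  simp only [AddSubmonoid.coe_add, Prod.fst_add, Prod.snd_add, Pi.add_apply] at this
  omega

theorem disjoint_range_coverVariable_tightFace (hα : IsBasicCover G k α) :
    Disjoint (Set.range (coverVariable G)) (tightFace G k α) := by
  refine Set.disjoint_left.2 ?_
  rintro _ ⟨v, rfl⟩ ⟨hvanish, htight⟩
  rcases eq_or_ne (α v) 0 with hv | hv
  · exact absurd (hvanish v hv) (by simp [coverVariable])
  · obtain ⟨w, hvw, heq⟩ := hα.exists_adj_add_eq hv
    exact absurd (htight v w hvw heq) (by simp [coverVariable, hvw.symm.ne])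

/-- The `2`-covers obtained by rounding a `(2r+1)`-cover `α` at the symmetric pair of thresholds
`r - j` and `r + j`. -/
def thresholdCover (r : ℕ) (α : Fin n → ℕ) (j : ℕ) : Fin n → ℕ := fun v =>
  (if r < α v + j then 1 else 0) + if r + j < α v then 1 else 0

theorem isCover_thresholdCover (hα : IsCover G (2 * r + 1) α) (j : ℕ) :
    IsCover G 2 (thresholdCover r α j) := fun u v huv => by
  have := hα huv
  simp only [thresholdCover]
  split_ifs <;> omega

theorem thresholdCover_mem_tightFace (hα : IsCover G (2 * r + 1) α) {j : ℕ} (hj : j ≤ r) :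
    (⟨(2, thresholdCover r α j), isCover_thresholdCover hα j⟩ : coverMonoid G) ∈
      tightFace G (2 * r + 1) α := by
  refine ⟨fun v hv => ?_, fun u v _ htight => ?_⟩ <;> simp only [thresholdCover] <;>
    split_ifs <;> omega

variable {a b : Fin r → Fin n}

theorem IsFreeParameterPair.exists_isCover (h : IsFreeParameterPair G a b) :
    ∃ γ, IsCover G (2 * r + 1) γ ∧ ∀ i, γ (a i) = r - i ∧ γ (b i) = r + 1 + i := by
  obtain ⟨ha, hb, hindep, hdisj, -, hle⟩ := h
  let γ : Fin n → ℕ := Function.extend a (fun i => r - i)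
    (Function.extend b (fun i => r + 1 + i) fun _ => 2 * r + 1)
  have hγa (i) : γ (a i) = r - i := ha.extend_apply _ _ i
  have hγb (i) : γ (b i) = r + 1 + i := by
    rw [← hb.extend_apply (fun i : Fin r => r + 1 + (i : ℕ)) (fun _ => 2 * r + 1) i]
    exact Function.extend_apply' _ _ _ fun ⟨j, hj⟩ => hdisj j i hj
  have hγ_other {v} (hva : v ∉ Set.range a) (hvb : v ∉ Set.range b) : γ v = 2 * r + 1 :=
    (Function.extend_apply' _ _ _ hva).trans (Function.extend_apply' _ _ _ hvb)
  have hγ_ge {v} (hva : v ∉ Set.range a) : r + 1 ≤ γ v := by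
    by_cases hvb : v ∈ Set.range b
    · obtain ⟨i, rfl⟩ := hvb
      exact (hγb i).ge.trans' (Nat.le_add_right _ _)
    · have := hγ_other hva hvb
      omega
  have hγ_adj {i v} (hv : G.Adj (a i) v) : 2 * r + 1 ≤ γ (a i) + γ v := by
    rw [hγa]
    have hva : v ∉ Set.range a := by
      rintro ⟨j, rfl⟩
      exact hindep i j hv
    by_cases hvb : v ∈ Set.range b
    · obtain ⟨j, rfl⟩ := hvb
      have : (i : ℕ) ≤ j := hle i j hv
      have := hγb j
      omega
    · have := hγ_other hva hvb
      omega
  refine ⟨γ, fun u v huv => ?_, fun i => ⟨hγa i, hγb i⟩⟩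
  by_cases hu : u ∈ Set.range a
  · obtain ⟨i, rfl⟩ := hu
    exact hγ_adj huv
  by_cases hv : v ∈ Set.range a
  · obtain ⟨i, rfl⟩ := hv
    exact add_comm (γ u) _ ▸ hγ_adj huv.symm
  · have := hγ_ge hu
    have := hγ_ge hv
    omega

theorem IsFreeParameterPair.exists_isBasicCover (h : IsFreeParameterPair G a b) :
    ∃ α, IsBasicCover G (2 * r + 1) α ∧ ∀ i, α (a i) = r - i := by
  obtain ⟨γ, hγ, hγab⟩ := h.exists_isCover
  obtain ⟨α, hαγ, hα⟩ := hγ.exists_isBasicCover_le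
  refine ⟨α, hα, fun i => ?_⟩
  obtain ⟨hγa, hγb⟩ := hγab i
  have hedge : 2 * r + 1 ≤ α (a i) + α (b i) := hα.1 (h.2.2.2.2.1 i)
  have ha : α (a i) ≤ r - i := (hαγ (a i)).trans_eq hγa
  have hb : α (b i) ≤ r + 1 + i := (hαγ (b i)).trans_eq hγb
  omega

theorem HasFreeParameterSet.le_ringKrullDim_symbolicFiberCone (K : Type*) [Field K]
    (h : HasFreeParameterSet G r) : (r + 1 : ℕ) ≤ ringKrullDim (symbolicFiberCone K G) := by
  obtain ⟨a, b, hab⟩ := h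
  obtain ⟨α, hα, hαa⟩ := hab.exists_isBasicCover
  let φ : Fin (r + 1) → coverMonoid G →+ ℕ := Fin.cons (coverDegree G) fun i => coverValue G (a i)
  rw [ringKrullDim_symbolicFiberCone]
  refine le_ringKrullDim_quotient_monomialIdeal_of_triangular K isFace_tightFace
    (disjoint_range_coverVariable_tightFace hα)
    (fun j => thresholdCover_mem_tightFace hα.1 j.is_le) (φ := φ) (fun i j hij => ?_) fun i => ?_
  · obtain ⟨i, rfl⟩ := Fin.exists_succ_eq.2 (Fin.ne_zero_of_lt hij)
    have hji : (j : ℕ) < i + 1 := hij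
    change thresholdCover r α j (a i) = 0
    simp only [thresholdCover, hαa]
    split_ifs <;> omega
  · cases i using Fin.cases with
    | zero => exact two_ne_zero
    | succ i =>
      change thresholdCover r α (i + 1) (a i) ≠ 0
      simp only [thresholdCover, hαa]
      split_ifs <;> omega

end LowerBound

section Forests

theorem exists_leaf_of_isAcyclic {V : Type*} [Finite V] {G : SimpleGraph V} (hG : G.IsAcyclic)
    (hne : G ≠ ⊥) : ∃ l p, G.Adj l p ∧ ∀ w, G.Adj l w → w = p := by
  obtain ⟨x, y, hxy⟩ := SimpleGraph.ne_bot_iff_exists_adj.1 hne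
  have : Nonempty V := ⟨x⟩
  obtain ⟨u, v, q, hq, hlongest⟩ := SimpleGraph.Walk.exists_isPath_forall_isPath_length_le_length G
  have hlen : 1 ≤ q.length := hlongest x y hxy.toWalk (by simp [hxy.ne])
  refine ⟨u, q.snd, q.adj_snd (SimpleGraph.Walk.not_nil_iff_lt_length.2 hlen), fun w hw => ?_⟩
  by_cases hwq : w ∈ q.support
  · exact hG.eq_snd_of_adj_start hq hw hwq
  · have := hlongest _ _ (q.cons hw.symm) (hq.cons hwq)
    simp at this

variable {n r : ℕ} {G : SimpleGraph (Fin n)}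

theorem IsFreeParameterPair.snoc {a b : Fin r → Fin n} {l p : Fin n} (hlp : G.Adj l p)
    (hleaf : ∀ w, G.Adj l w → w = p) (h : IsFreeParameterPair (G.deleteIncidenceSet p) a b) :
    IsFreeParameterPair G (Fin.snoc (α := fun _ => Fin n) a l)
      (Fin.snoc (α := fun _ => Fin n) b p) := by
  obtain ⟨ha, hb, hindep, hdisj, hadj, hle⟩ := h
  simp only [SimpleGraph.deleteIncidenceSet_adj] at hindep hadj hle
  have hal (i) : a i ≠ l := fun hi => (hadj i).2.2 (hleaf _ (hi ▸ (hadj i).1))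
  have hbl (i) : b i ≠ l := fun hi => (hadj i).2.1 (hleaf _ (hi ▸ (hadj i).1.symm))
  have hap (i) : a i ≠ p := (hadj i).2.1
  have hbp (i) : b i ≠ p := (hadj i).2.2
  have hl {w} (hw : w ≠ p) : ¬ G.Adj l w := fun h => hw (hleaf w h)
  refine ⟨Fin.snoc_injective_of_injective ha fun ⟨i, hi⟩ => hal i hi,
    Fin.snoc_injective_of_injective hb fun ⟨i, hi⟩ => hbp i hi, ?_, ?_, ?_, ?_⟩
  · simp only [Fin.forall_fin_succ', Fin.snoc_castSucc, Fin.snoc_last]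
    exact ⟨fun i => ⟨fun j h => hindep i j ⟨h, hap i, hap j⟩, fun h => hl (hap i) h.symm⟩,
      fun j => hl (hap j), G.irrefl⟩
  · simp only [Fin.forall_fin_succ', Fin.snoc_castSucc, Fin.snoc_last]
    exact ⟨fun i => ⟨hdisj i, hap i⟩, fun j => (hbl j).symm, hlp.ne⟩
  · simp only [Fin.forall_fin_succ', Fin.snoc_castSucc, Fin.snoc_last]
    exact ⟨fun i => (hadj i).1, hlp⟩
  · simp only [Fin.forall_fin_succ', Fin.snoc_castSucc, Fin.snoc_last]
    exact ⟨fun i => ⟨fun j h => hle i j ⟨h, hap i, hbp j⟩, fun _ => Fin.le_last _⟩,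
      fun j h => absurd h (hl (hbp j)), fun _ => le_rfl⟩

theorem exists_isVertexCover_hasFreeParameterSet_of_isAcyclic (hG : G.IsAcyclic) :
    ∃ C : Finset (Fin n), G.IsVertexCover C ∧ HasFreeParameterSet G C.card := by
  suffices ∃ (r : ℕ) (a b : Fin r → Fin n),
      IsFreeParameterPair G a b ∧ G.IsVertexCover (Set.range b) by
    obtain ⟨r, a, b, hab, hcover⟩ := this
    refine ⟨Finset.univ.map ⟨b, hab.2.1⟩, by simpa using hcover, ?_⟩
    rw [Finset.card_map, Finset.card_fin]
    exact ⟨a, b, hab⟩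
  induction G using WellFoundedLT.induction with
  | ind G ih =>
  rcases eq_or_ne G ⊥ with rfl | hne
  · exact ⟨0, Fin.elim0, Fin.elim0, by simp [IsFreeParameterPair, Function.Injective],
      SimpleGraph.isVertexCover_bot _⟩
  obtain ⟨l, p, hlp, hleaf⟩ := exists_leaf_of_isAcyclic hG hne
  have hlt : G.deleteIncidenceSet p < G := by
    refine lt_of_le_of_ne (G.deleteIncidenceSet_le p) fun heq => ?_
    rw [← heq, SimpleGraph.deleteIncidenceSet_adj] at hlp
    exact hlp.2.2 rfl
  obtain ⟨r, a, b, hab, hcover⟩ := ih _ hlt (hG.anti hlt.le)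
  refine ⟨r + 1, _, _, hab.snoc hlp hleaf, fun u v huv => ?_⟩
  rw [Fin.range_snoc]
  by_contra! huv_notMem
  simp only [Set.mem_insert_iff, not_or] at huv_notMem
  obtain ⟨⟨hup, hub⟩, hvp, hvb⟩ := huv_notMem
  exact (hcover (SimpleGraph.deleteIncidenceSet_adj.2 ⟨huv, hup, hvp⟩)).elim hub hvb

theorem HasFreeParameterSet.hasMatchingOfSize (h : HasFreeParameterSet G r) :
    HasMatchingOfSize G r := by
  obtain ⟨a, b, ha, hb, -, hab, hadj, -⟩ := h
  exact ⟨fun i => (a i, b i), hadj, fun i j hij =>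
    ⟨ha.ne hij, hab i j, (hab j i).symm, hb.ne hij⟩⟩

theorem HasMatchingOfSize.le_card {C : Finset (Fin n)} (h : HasMatchingOfSize G r)
    (hC : G.IsVertexCover C) : r ≤ C.card := by
  obtain ⟨e, hadj, hdisj⟩ := h
  have hcovered (i) : ∃ v ∈ C, v = (e i).1 ∨ v = (e i).2 := by
    rcases hC (hadj i) with h | h
    exacts [⟨_, h, Or.inl rfl⟩, ⟨_, h, Or.inr rfl⟩]
  choose f hfC hfe using hcovered
  have hf : Function.Injective f := fun i j hij => by
    by_contra hne
    grind
  simpa using Finset.card_le_card_of_injOn f (s := Finset.univ) (fun i _ => hfC i) hf.injOn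

end Forests

theorem gdim_eq_matchingNumber_of_tree_general (K : Type*) [Field K] {n : ℕ}
    (G : SimpleGraph (Fin n)) (hG : G.IsAcyclic) :
    gdim G = matchingNumber G + 1 ∧
      ringKrullDim (symbolicFiberCone K G) =
        ((matchingNumber G + 1 : ℕ) : WithBot (WithTop ℕ)) := by
  obtain ⟨C, hC, hfree⟩ := exists_isVertexCover_hasFreeParameterSet_of_isAcyclic hG
  have hmatching : matchingNumber G = C.card :=
    IsGreatest.csSup_eq ⟨hfree.hasMatchingOfSize, fun _ h => h.le_card hC⟩
  have hgdim : gdim G = C.card + 1 := congrArg (· + 1) <|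
    IsGreatest.csSup_eq ⟨hfree, fun _ h => h.hasMatchingOfSize.le_card hC⟩
  rw [hgdim, hmatching]
  exact ⟨rfl, (ringKrullDim_symbolicFiberCone_le K hC).antisymm
    (hfree.le_ringKrullDim_symbolicFiberCone K)⟩

/-- If `G` is a tree, then `gdim(G) = ν(G) + 1`; consequently the Krull
dimension of the symbolic fiber cone satisfies `dim Ā(G) = ν(G) + 1`. -/
theorem gdim_eq_matchingNumber_of_tree (K : Type*) [Field K] {n : ℕ}
    (G : SimpleGraph (Fin n)) (htree : G.IsTree)
    (hiso : ∀ v : Fin n, ∃ w, G.Adj v w) :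
    gdim G = matchingNumber G + 1 ∧
      ringKrullDim (symbolicFiberCone K G) = ((matchingNumber G + 1 : ℕ) : WithBot (WithTop ℕ)) := by
  exact gdim_eq_matchingNumber_of_tree_general K G htree.isAcyclic
end

section
/- Let G be a graph, k>0 a natural number, and α a basic k-cover of G. If r is the number of distinct values that α takes which are at most k/2, i.e. r = |{α(v) : v∈V and α(v)≤k/2}|, then G has a free parameter set of cardinality r; in particular gdim(G) ≥ r+1. -/
/-!
In a basic cover every non-isolated vertex `v` lies on a tight edge, that is, an edge `vw` with
`α v + α w = k`: otherwise `α v` could be lowered, or `α v = 0` and some neighbour has value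
larger than `k`, which could be lowered to `k`. List the values at most `k / 2` in decreasing
order, take vertices `aᵢ` realizing them, and let `aᵢbᵢ` be tight. An edge `aᵢbⱼ` then gives
`k ≤ α aᵢ + α bⱼ = α aᵢ + k - α aⱼ`, so `α aⱼ ≤ α aᵢ` and `i ≤ j`; an edge `aᵢaⱼ` would force both
values to be `k / 2`, hence `i = j`, and there are no loops. Injectivity of both families and their
disjointness are formal consequences.
-/

theorem exists_strictAnti_comp_of_subset_range {ι β : Type*} [LinearOrder β] {f : ι → β}
    {s : Set β} (hs : s.Finite) (hsf : s ⊆ Set.range f) :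
    ∃ a : Fin s.ncard → ι, StrictAnti (f ∘ a) ∧ ∀ i, f (a i) ∈ s := by
  let e := hs.toFinset.orderEmbOfFin (Set.ncard_eq_toFinset_card s hs).symm
  have he : ∀ i, e i ∈ s := fun i => hs.mem_toFinset.mp (Finset.orderEmbOfFin_mem _ _ i)
  choose a ha using fun i : Fin s.ncard => hsf (he i.rev)
  refine ⟨a, fun i j hij => ?_, fun i => ?_⟩
  · simpa only [Function.comp_apply, ha] using e.strictMono (Fin.rev_lt_rev.mpr hij)
  · simpa only [ha] using he i.rev

section

variable {n k r : ℕ} {G : SimpleGraph (Fin n)} {α : Fin n → ℕ}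

theorem IsCover.update {v : Fin n} {m : ℕ} (hα : IsCover G k α)
    (hm : ∀ w, G.Adj v w → k ≤ m + α w) : IsCover G k (Function.update α v m) := by
  intro i j hij
  rcases eq_or_ne i v with rfl | hi
  · simpa only [Function.update_self, Function.update_of_ne hij.ne'] using hm j hij
  rcases eq_or_ne j v with rfl | hj
  · simpa only [Function.update_self, Function.update_of_ne hi, add_comm] using hm i hij.symm
  · simpa only [Function.update_of_ne hi, Function.update_of_ne hj] using hα hij

namespace IsBasicCover

theorem apply_le_of_forall_adj {v : Fin n} {m : ℕ} (hα : IsBasicCover G k α)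
    (hm : ∀ w, G.Adj v w → k ≤ m + α w) : α v ≤ m := by
  by_contra! hlt
  have heq : Function.update α v m = α :=
    hα.2 _ (update_le_self_iff.mpr hlt.le) (hα.1.update hm)
  exact hlt.ne (Function.update_eq_self_iff.mp heq)

theorem apply_le (hα : IsBasicCover G k α) (v : Fin n) : α v ≤ k :=
  hα.apply_le_of_forall_adj fun _ _ => Nat.le_add_right _ _

theorem exists_adj_add_eq_s10 {v : Fin n} (hα : IsBasicCover G k α) (hv : ∃ w, G.Adj v w) :
    ∃ w, G.Adj v w ∧ α v + α w = k := by
  by_contra! hne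
  have hlt : ∀ w, G.Adj v w → k < α v + α w := fun w hw => (hα.1 hw).lt_of_ne' (hne w hw)
  have hpred : α v ≤ α v - 1 := hα.apply_le_of_forall_adj fun w hw => by
    have := hlt w hw
    omega
  have hzero : α v = 0 := by omega
  obtain ⟨w, hw⟩ := hv
  have hkw : k < α w := by simpa only [hzero, zero_add] using hlt w hw
  exact hkw.not_ge (hα.apply_le w)

end IsBasicCover

theorem IsFreeParameterPair.of_not_adj_of_adj_imp_le {a b : Fin r → Fin n}
    (hindep : ∀ i j, ¬ G.Adj (a i) (a j)) (hadj : ∀ i, G.Adj (a i) (b i))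
    (hle : ∀ i j, G.Adj (a i) (b j) → i ≤ j) : IsFreeParameterPair G a b := by
  refine ⟨fun i j hij => ?_, fun i j hij => ?_, hindep, fun i j hij => ?_, hadj, hle⟩
  · exact le_antisymm (hle i j (hij ▸ hadj j)) (hle j i (hij ▸ hadj i))
  · exact le_antisymm (hle i j (hij ▸ hadj i)) (hle j i (hij ▸ hadj j))
  · exact hindep j i (hij ▸ hadj j)

theorem IsCover.isFreeParameterPair {a b : Fin r → Fin n} (hα : IsCover G k α)
    (hanti : StrictAnti (α ∘ a)) (hsmall : ∀ i, 2 * α (a i) ≤ k)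
    (hadj : ∀ i, G.Adj (a i) (b i)) (htight : ∀ i, α (a i) + α (b i) = k) :
    IsFreeParameterPair G a b := by
  refine .of_not_adj_of_adj_imp_le (fun i j hij => ?_) hadj fun i j hij => ?_
  · have heq : α (a i) = α (a j) := by linarith [hα hij, hsmall i, hsmall j]
    exact hij.ne (congrArg a (hanti.injective heq))
  · have hle : α (a j) ≤ α (a i) := by linarith [hα hij, htight j]
    exact hanti.le_iff_ge.mp hle

theorem IsCover.hasFreeParameterSet (hα : IsCover G k α)
    (htight : ∀ v, 2 * α v ≤ k → ∃ w, G.Adj v w ∧ α v + α w = k) :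
    HasFreeParameterSet G {m : ℕ | 2 * m ≤ k ∧ ∃ v : Fin n, α v = m}.ncard := by
  have hrange : {m : ℕ | 2 * m ≤ k ∧ ∃ v : Fin n, α v = m} ⊆ Set.range α := fun _ hm => hm.2
  obtain ⟨a, hanti, ha⟩ :=
    exists_strictAnti_comp_of_subset_range ((Set.finite_range α).subset hrange) hrange
  choose b hadj hsum using fun i => htight (a i) (ha i).1
  exact ⟨a, b, hα.isFreeParameterPair hanti (fun i => (ha i).1) hadj hsum⟩

theorem bddAbove_setOf_hasFreeParameterSet (G : SimpleGraph (Fin n)) :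
    BddAbove {r : ℕ | HasFreeParameterSet G r} := by
  refine ⟨n, ?_⟩
  rintro r ⟨a, -, ha, -⟩
  simpa only [Fintype.card_fin] using Fintype.card_le_of_injective a ha

theorem HasFreeParameterSet.succ_le_gdim (h : HasFreeParameterSet G r) : r + 1 ≤ gdim G :=
  Nat.succ_le_succ (le_csSup (bddAbove_setOf_hasFreeParameterSet G) h)

end

/-- Let `α` be a basic `k`-cover of `G` (`k > 0`) and let `r` be the
number of distinct values of `α` which are at most `k/2`.  Then `G` has a free parameter set
of cardinality `r`; in particular `gdim(G) ≥ r + 1`. -/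
theorem freeParameterSet_of_basicCover {n k r : ℕ} (G : SimpleGraph (Fin n))
    (hiso : ∀ v : Fin n, ∃ w, G.Adj v w)
    (hk : 0 < k) (α : Fin n → ℕ) (hα : IsBasicCover G k α)
    (hr : r = Set.ncard {m : ℕ | 2 * m ≤ k ∧ ∃ v : Fin n, α v = m}) :
    HasFreeParameterSet G r ∧ r + 1 ≤ gdim G := by
  have hfree : HasFreeParameterSet G r :=
    hr ▸ hα.1.hasFreeParameterSet fun v _ => hα.exists_adj_add_eq_s10 (hiso v)
  exact ⟨hfree, hfree.succ_le_gdim⟩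
end

section
/- Let K be an infinite field and I ⊆ S = K[x_1,…,x_n] a square-free monomial ideal of pure codimension 2 (every minimal prime of I has height 2), and let d be the minimum degree of a nonzero monomial in I. Then ara(I S_m) ≤ min{d+1, n−d+1}. -/
open MvPolynomial

/-- The irrelevant maximal ideal `m = (x_1, …, x_n)` of `S = K[x_1,…,x_n]`. -/
noncomputable def mIdeal (K : Type*) [Field K] (n : ℕ) : Ideal (MvPolynomial (Fin n) K) :=
  Ideal.span (Set.range MvPolynomial.X)

theorem mIdeal_eq_ker (K : Type*) [Field K] (n : ℕ) :
    mIdeal K n = RingHom.ker (constantCoeff : MvPolynomial (Fin n) K →+* K) := by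
  apply le_antisymm
  · rw [mIdeal, Ideal.span_le]
    rintro _ ⟨i, rfl⟩
    simp [RingHom.mem_ker]
  · intro p hp
    rw [RingHom.mem_ker] at hp
    rw [mIdeal, ← Set.image_univ, mem_ideal_span_X_image]
    intro m hm
    by_contra h
    push_neg at h
    have hm0 : m = 0 := by
      ext i
      exact h i (Set.mem_univ i)
    subst hm0
    exact (mem_support_iff.mp hm) (by simpa [constantCoeff_eq] using hp)

instance mIdeal_isMaximal (K : Type*) [Field K] (n : ℕ) : (mIdeal K n).IsMaximal := by
  rw [mIdeal_eq_ker]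
  exact RingHom.ker_isMaximal_of_surjective _ fun a => ⟨MvPolynomial.C a, by simp⟩

instance mIdeal_isPrime (K : Type*) [Field K] (n : ℕ) : (mIdeal K n).IsPrime :=
  (mIdeal_isMaximal K n).isPrime

/-- The localization `S_m` of the polynomial ring at the irrelevant maximal ideal. -/
noncomputable abbrev SLoc (K : Type*) [Field K] (n : ℕ) : Type _ :=
  Localization.AtPrime (mIdeal K n)

/-- The arithmetical rank of an ideal: the least `r` such that some `r` elements generate an
ideal with the same radical. -/
noncomputable def ara {R : Type*} [CommRing R] (I : Ideal R) : ℕ :=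
  sInf {r : ℕ | ∃ f : Fin r → R, Ideal.radical (Ideal.span (Set.range f)) = Ideal.radical I}

/-!
A square-free monomial ideal of pure codimension two has the same radical as the cover ideal
`⋂ (x_i, x_j)` of a graph `G`, whose vertex cover number is `d`. The minimal `2`-covers of `G` are
called basic. As rank of a `2`-cover take either the number of vertices of weight `0`, which is at
most `n - d` since these vertices are independent, or the number of vertices of weight `≠ 1` in a
fixed vertex cover of size `d`. For each rank, take the sum of the monomials of the basic `2`-covers
of that rank.

The product of the monomials of two `2`-covers is also the product of the monomials of their inner
and outer parts, and the inner part of two distinct basic `2`-covers of equal rank has smaller rank.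
If the sums vanish modulo a prime `P`, choose a valuation centred on the maximal ideal with support
`P`. Among the basic `2`-covers whose monomial has the largest value, consider one of smallest rank.
If the value is not zero, cancellation produces a second one of the same rank and the same value,
and then the inner part of the two has the same value again, hence is basic, but has smaller rank.
-/

section TwoCovers

variable {ι α : Type*}

/-- A `2`-cover of a graph: a weighting of the vertices for which the two ends of every edge have
total weight at least `2`. -/
def IsTwoCover (G : SimpleGraph ι) (c : ι → ℕ) : Prop :=
  ∀ ⦃i j⦄, G.Adj i j → 2 ≤ c i + c j

/-- A basic `2`-cover: one in which no weight can be lowered. -/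
def IsBasicTwoCover (G : SimpleGraph ι) (c : ι → ℕ) : Prop :=
  Minimal (IsTwoCover G) c

/-- The more balanced of the two `2`-covers into which the sum of two `2`-covers is redistributed:
the pointwise median of `c`, `c'` and `1`. -/
def innerPart (c c' : ι → ℕ) : ι → ℕ := fun i => max (min (c i) (c' i)) (min 1 (max (c i) (c' i)))

/-- The more extreme of the two `2`-covers into which the sum of two `2`-covers is redistributed.
The subtraction never truncates, see `innerPart_add_outerPart`. -/
def outerPart (c c' : ι → ℕ) : ι → ℕ := c + c' - innerPart c c'

variable {G : SimpleGraph ι} {c c' : ι → ℕ}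

theorem innerPart_add_outerPart (c c' : ι → ℕ) : innerPart c c' + outerPart c c' = c + c' := by
  funext i
  simp only [innerPart, outerPart, Pi.add_apply, Pi.sub_apply]
  omega

theorem IsTwoCover.isTwoCover_innerPart (hc : IsTwoCover G c) (hc' : IsTwoCover G c') :
    IsTwoCover G (innerPart c c') := by
  intro i j hij
  have := hc hij
  have := hc' hij
  simp only [innerPart]
  omega

theorem IsTwoCover.isTwoCover_outerPart (hc : IsTwoCover G c) (hc' : IsTwoCover G c') :
    IsTwoCover G (outerPart c c') := by
  intro i j hij
  have := hc hij
  have := hc' hij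
  simp only [innerPart, outerPart, Pi.add_apply, Pi.sub_apply]
  omega

theorem IsBasicTwoCover.isTwoCover (hc : IsBasicTwoCover G c) : IsTwoCover G c :=
  hc.prop

theorem IsTwoCover.exists_isBasicTwoCover_le [Finite ι] (hc : IsTwoCover G c) :
    ∃ b ≤ c, IsBasicTwoCover G b :=
  exists_minimal_le_of_wellFoundedLT _ c hc

theorem IsBasicTwoCover.exists_adj_add_le_two (hc : IsBasicTwoCover G c) {i : ι} (hi : c i ≠ 0) :
    ∃ j, G.Adj i j ∧ c i + c j ≤ 2 := by
  classical
  by_contra! hslack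
  have hlower : IsTwoCover G (Function.update c i (c i - 1)) := by
    intro j k hjk
    have := hc.isTwoCover hjk
    simp only [Function.update_apply]
    split_ifs with hji hki hki
    · exact absurd (hji.trans hki.symm) hjk.ne
    · have := hslack k (hji ▸ hjk)
      omega
    · have := hslack j (hki ▸ hjk.symm)
      omega
    · assumption
  have : c i ≤ c i - 1 := by
    simpa only [Function.update_self] using
      hc.le_of_le hlower (update_le_self_iff.2 (Nat.sub_le _ _)) i
  omega

theorem IsBasicTwoCover.le_two (hc : IsBasicTwoCover G c) (i : ι) : c i ≤ 2 := by
  by_cases hi : c i = 0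
  · omega
  · obtain ⟨j, -, hj⟩ := hc.exists_adj_add_le_two hi
    omega

theorem finite_setOf_isBasicTwoCover [Finite ι] (G : SimpleGraph ι) :
    {c | IsBasicTwoCover G c}.Finite := by
  have := Fintype.ofFinite ι
  classical exact (Set.finite_Iic (fun _ => 2)).subset fun c hc i => hc.le_two i

theorem IsBasicTwoCover.le_of_eq_on_neighbors (hc : IsBasicTwoCover G c) (hc' : IsTwoCover G c')
    {i : ι} (h : ∀ j, G.Adj i j → c j = c' j) : c i ≤ c' i := by
  by_cases hi : c i = 0
  · omega
  · obtain ⟨j, hij, hj⟩ := hc.exists_adj_add_le_two hi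
    have := h j hij
    have := hc' hij
    omega

theorem IsBasicTwoCover.eq_of_eqOn_isVertexCover (hc : IsBasicTwoCover G c)
    (hc' : IsBasicTwoCover G c') {D : Set ι} (hD : G.IsVertexCover D) (h : Set.EqOn c c' D) :
    c = c' := by
  funext i
  by_cases hi : i ∈ D
  · exact h hi
  · have hnbr : ∀ j, G.Adj i j → c j = c' j := fun j hij => h ((hD hij).resolve_left hi)
    exact le_antisymm (hc.le_of_eq_on_neighbors hc'.isTwoCover hnbr)
      (hc'.le_of_eq_on_neighbors hc.isTwoCover fun j hij => (hnbr j hij).symm)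

theorem IsBasicTwoCover.two_le_of_eq_zero_imp (hc : IsBasicTwoCover G c) (hc' : IsTwoCover G c')
    (h : ∀ i, c i = 0 → c' i = 0) {i : ι} (hi : c i = 2) : 2 ≤ c' i := by
  obtain ⟨j, hij, hj⟩ := hc.exists_adj_add_le_two (i := i) (by omega)
  have := h j (by omega)
  have := hc' hij
  omega

theorem IsBasicTwoCover.eq_of_eq_zero_iff (hc : IsBasicTwoCover G c) (hc' : IsBasicTwoCover G c')
    (h : ∀ i, c i = 0 ↔ c' i = 0) : c = c' := by
  funext i
  have := h i
  have := hc.le_two i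
  have := hc'.le_two i
  have := hc.two_le_of_eq_zero_imp hc'.isTwoCover (fun j => (h j).1) (i := i)
  have := hc'.two_le_of_eq_zero_imp hc.isTwoCover (fun j => (h j).2) (i := i)
  omega

/-- An invariant of basic `2`-covers with values in finite sets that is injective and sends inner
parts to intersections. The cardinality of `Z c` serves as the rank of `c`. -/
structure IsMeetEmbedding [DecidableEq α] (G : SimpleGraph ι) (Z : (ι → ℕ) → Finset α) :
    Prop where
  injOn : Set.InjOn Z {c | IsBasicTwoCover G c}
  map_innerPart : ∀ ⦃c c'⦄, IsBasicTwoCover G c → IsBasicTwoCover G c' →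
    Z (innerPart c c') = Z c ∩ Z c'

theorem IsMeetEmbedding.card_innerPart_lt [DecidableEq α] {Z : (ι → ℕ) → Finset α}
    (hZ : IsMeetEmbedding G Z) (hc : IsBasicTwoCover G c) (hc' : IsBasicTwoCover G c')
    (hne : c ≠ c') (hcard : (Z c).card = (Z c').card) :
    (Z (innerPart c c')).card < (Z c).card := by
  rw [hZ.map_innerPart hc hc']
  refine Finset.card_lt_card (Finset.inter_subset_left.ssubset_of_ne fun h => hne ?_)
  exact hZ.injOn hc hc' (Finset.eq_of_subset_of_card_le (Finset.inter_eq_left.1 h) hcard.ge)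

theorem isMeetEmbedding_zeros [Fintype ι] [DecidableEq ι] (G : SimpleGraph ι) :
    IsMeetEmbedding G fun c => Finset.univ.filter (c · = 0) where
  injOn c hc c' hc' h :=
    IsBasicTwoCover.eq_of_eq_zero_iff hc hc' (by simpa [Finset.ext_iff] using h)
  map_innerPart c c' _ _ := by
    ext i
    simp only [Finset.mem_filter_univ, Finset.mem_inter]
    simp only [innerPart]
    omega

theorem isMeetEmbedding_graph_ne_one [DecidableEq ι] {D : Finset ι} (hD : G.IsVertexCover D) :
    IsMeetEmbedding G fun c => (D.image fun i => (i, c i)).filter (·.2 ≠ 1) where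
  injOn c hc c' hc' h := by
    have hmem : ∀ i ∈ D, ∀ k ≠ 1, c i = k ↔ c' i = k := by
      intro i hi k hk
      simpa [hi, hk] using Finset.ext_iff.1 h (i, k)
    refine IsBasicTwoCover.eq_of_eqOn_isVertexCover hc hc' hD fun i hi => ?_
    by_cases hone : c i = 1
    · by_contra hne
      exact hne ((hmem i hi (c' i) (by omega)).2 rfl)
    · exact ((hmem i hi (c i) hone).1 rfl).symm
  map_innerPart c c' hc hc' := by
    ext ⟨i, k⟩
    have := hc.le_two i
    have := hc'.le_two i
    simp only [innerPart, Finset.mem_filter, Finset.mem_image, Prod.mk.injEq, Finset.mem_inter,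
      ← and_assoc]
    grind

end TwoCovers

section Valuations

universe u

theorem exists_valuation_supp_eq {R : Type u} [CommRing R] (P J : Ideal R) [P.IsPrime]
    (h : J ⊔ P ≠ ⊤) :
    ∃ (Γ₀ : Type u) (_ : LinearOrderedCommGroupWithZero Γ₀) (v : Valuation R Γ₀),
      v.supp = P ∧ ∀ a ∈ J, v a < 1 := by
  let g : R →+* FractionRing (R ⧸ P) := algebraMap R _
  have hker : RingHom.ker g = P := by
    ext a
    exact (FaithfulSMul.algebraMap_eq_zero_iff (R ⧸ P) _).trans Ideal.Quotient.eq_zero_iff_mem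
  have hJ : J.map g.rangeRestrict ≠ ⊤ := by
    intro htop
    have := Ideal.comap_map_of_surjective' _ g.rangeRestrict_surjective J
    rw [htop, Ideal.comap_top, RingHom.ker_rangeRestrict, hker] at this
    exact h this.symm
  obtain ⟨B, -, hB⟩ := (J.map g.rangeRestrict).image_subset_nonunits_valuationSubring hJ
  refine ⟨B.ValueGroup, inferInstance, B.valuation.comap g, ?_, fun a ha => ?_⟩
  · ext a
    rw [Valuation.mem_supp_iff, Valuation.comap_apply, map_eq_zero, ← RingHom.mem_ker, hker]
  · exact hB ⟨_, Ideal.mem_map_of_mem _ ha, rfl⟩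

theorem exists_ne_map_le_of_map_sum_eq_zero {R Γ₀ κ : Type*} [Ring R]
    [LinearOrderedCommGroupWithZero Γ₀] (v : Valuation R Γ₀) {s : Finset κ} {f : κ → R} {j : κ}
    (hj : j ∈ s) (hfj : v (f j) ≠ 0) (hsum : v (∑ i ∈ s, f i) = 0) :
    ∃ i ∈ s, i ≠ j ∧ v (f j) ≤ v (f i) := by
  classical
  by_contra! hlt
  refine hfj ((v.map_sum_eq_of_lt hj fun i hi => ?_).symm.trans hsum)
  rw [Finset.mem_sdiff, Finset.mem_singleton] at hi
  exact hlt i hi.1 hi.2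

end Valuations

section Monomials

variable {ι M R Γ₀ : Type*} [Fintype ι]

/-- The monomial `∏ i, x i ^ c i` with exponent vector `c`, evaluated at a family `x`. -/
def monomialAt [CommMonoid M] (x : ι → M) (c : ι → ℕ) : M := ∏ i, x i ^ c i

theorem monomialAt_add [CommMonoid M] (x : ι → M) (a b : ι → ℕ) :
    monomialAt x (a + b) = monomialAt x a * monomialAt x b := by
  simp only [monomialAt, Pi.add_apply, pow_add, Finset.prod_mul_distrib]

theorem monomialAt_mem_iff [CommSemiring R] (P : Ideal R) [P.IsPrime] {x : ι → R} {c : ι → ℕ} :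
    monomialAt x c ∈ P ↔ ∃ i, c i ≠ 0 ∧ x i ∈ P := by
  rw [monomialAt, Ideal.IsPrime.prod_mem_iff]
  refine exists_congr fun i => ?_
  by_cases hi : c i = 0
  · simp [hi, Ideal.IsPrime.one_notMem]
  · simp [hi, Ideal.IsPrime.pow_mem_iff_mem ‹_› _ (Nat.pos_of_ne_zero hi)]

variable [CommRing R] [LinearOrderedCommGroupWithZero Γ₀] (v : Valuation R Γ₀) {x : ι → R}
  {a b : ι → ℕ}

theorem map_monomialAt_lt_one (hx : ∀ i, v (x i) < 1) (ha : a ≠ 0) : v (monomialAt x a) < 1 := by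
  classical
  obtain ⟨i, hi⟩ := Function.ne_iff.1 ha
  rw [monomialAt, map_prod, ← Finset.mul_prod_erase _ _ (Finset.mem_univ i), map_pow]
  refine mul_lt_one_of_lt_of_le (pow_lt_one₀ zero_le (hx i) hi) (Finset.prod_le_one' fun j _ => ?_)
  rw [map_pow]
  exact pow_le_one₀ zero_le (hx j).le

theorem map_monomialAt_lt_of_lt (hx : ∀ i, v (x i) < 1) (hab : a < b)
    (ha : v (monomialAt x a) ≠ 0) : v (monomialAt x b) < v (monomialAt x a) := by
  rw [← add_tsub_cancel_of_le hab.le, monomialAt_add, map_mul]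
  exact mul_lt_of_lt_one_right (zero_lt_iff.2 ha)
    (map_monomialAt_lt_one v hx (tsub_pos_of_lt hab).ne')

theorem map_monomialAt_le_of_le (hx : ∀ i, v (x i) < 1) (hab : a ≤ b) :
    v (monomialAt x b) ≤ v (monomialAt x a) := by
  rcases hab.eq_or_lt with rfl | hlt
  · exact le_rfl
  rw [← add_tsub_cancel_of_le hab, monomialAt_add, map_mul]
  exact mul_le_of_le_one_right zero_le
    (map_monomialAt_lt_one v hx (tsub_pos_of_lt hlt).ne').le

end Monomials

section LevelSums

variable {ι α R Γ₀ : Type*} [Fintype ι]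

/-- The finite set of basic `2`-covers of a finite graph. -/
noncomputable def basicTwoCovers (G : SimpleGraph ι) : Finset (ι → ℕ) :=
  (finite_setOf_isBasicTwoCover G).toFinset

theorem mem_basicTwoCovers {G : SimpleGraph ι} {c : ι → ℕ} :
    c ∈ basicTwoCovers G ↔ IsBasicTwoCover G c := by
  simp [basicTwoCovers]

/-- The sum of the monomials of the basic `2`-covers of rank `k`, evaluated at `x`. -/
noncomputable def levelSum [CommSemiring R] (G : SimpleGraph ι) (Z : (ι → ℕ) → Finset α)
    (x : ι → R) (k : ℕ) : R :=
  ∑ c ∈ basicTwoCovers G with (Z c).card = k, monomialAt x c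

variable [DecidableEq α] {G : SimpleGraph ι} {Z : (ι → ℕ) → Finset α}
  [CommRing R] {x : ι → R}

section Valuation

variable [LinearOrderedCommGroupWithZero Γ₀] {v : Valuation R Γ₀} {b : ι → ℕ}

theorem IsMeetEmbedding.exists_card_lt_of_levelSum_eq_zero (hZ : IsMeetEmbedding G Z)
    (hx : ∀ i, v (x i) < 1) (hb : IsBasicTwoCover G b)
    (hmax : ∀ c, IsTwoCover G c → v (monomialAt x c) ≤ v (monomialAt x b))
    (hne : v (monomialAt x b) ≠ 0) (hsum : v (levelSum G Z x (Z b).card) = 0) :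
    ∃ b', IsBasicTwoCover G b' ∧ v (monomialAt x b') = v (monomialAt x b) ∧
      (Z b').card < (Z b).card := by
  have hmem : b ∈ (basicTwoCovers G).filter fun c => (Z c).card = (Z b).card :=
    Finset.mem_filter.2 ⟨mem_basicTwoCovers.2 hb, rfl⟩
  obtain ⟨c, hc, hcb, hle⟩ := exists_ne_map_le_of_map_sum_eq_zero v hmem hne hsum
  rw [Finset.mem_filter, mem_basicTwoCovers] at hc
  have hin := hb.isTwoCover.isTwoCover_innerPart hc.1.isTwoCover
  have hout := hb.isTwoCover.isTwoCover_outerPart hc.1.isTwoCover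
  have hval : v (monomialAt x (innerPart b c)) = v (monomialAt x b) := by
    refine (hmax _ hin).eq_of_not_lt fun hlt => ?_
    refine lt_irrefl (v (monomialAt x b) * v (monomialAt x b)) ?_
    calc v (monomialAt x b) * v (monomialAt x b)
        ≤ v (monomialAt x b) * v (monomialAt x c) := by gcongr
      _ = v (monomialAt x (innerPart b c)) * v (monomialAt x (outerPart b c)) := by
          rw [← map_mul, ← map_mul, ← monomialAt_add, ← monomialAt_add, innerPart_add_outerPart]
      _ ≤ v (monomialAt x (innerPart b c)) * v (monomialAt x b) := by gcongr; exact hmax _ hout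
      _ < v (monomialAt x b) * v (monomialAt x b) :=
          mul_lt_mul_of_pos_right hlt (zero_lt_iff.2 hne)
  have hbasic : IsBasicTwoCover G (innerPart b c) := by
    obtain ⟨b', hle, hb'⟩ := hin.exists_isBasicTwoCover_le
    rcases hle.eq_or_lt with rfl | hlt
    · exact hb'
    have hne' : v (monomialAt x b') ≠ 0 := fun h0 =>
      hne (le_zero_iff.1 (hval ▸ h0 ▸ map_monomialAt_le_of_le v hx hle))
    exact absurd (hmax b' hb'.isTwoCover)
      (hval ▸ map_monomialAt_lt_of_lt v hx hlt hne').not_ge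
  exact ⟨_, hbasic, hval, hZ.card_innerPart_lt hb hc.1 hcb.symm hc.2.symm⟩

theorem IsMeetEmbedding.map_monomialAt_eq_zero_of_forall_le (hZ : IsMeetEmbedding G Z)
    (hx : ∀ i, v (x i) < 1) (hsum : ∀ k, v (levelSum G Z x k) = 0) (hb : IsBasicTwoCover G b)
    (hmax : ∀ c, IsTwoCover G c → v (monomialAt x c) ≤ v (monomialAt x b)) :
    v (monomialAt x b) = 0 := by
  induction hk : (Z b).card using Nat.strong_induction_on generalizing b with
  | _ k ih =>
    by_contra hne
    obtain ⟨b', hb', hval, hlt⟩ :=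
      hZ.exists_card_lt_of_levelSum_eq_zero hx hb hmax hne (hsum _)
    exact hne (hval ▸ ih _ (hk ▸ hlt) hb' (by simpa only [hval] using hmax) rfl)

theorem IsMeetEmbedding.map_monomialAt_eq_zero (hZ : IsMeetEmbedding G Z)
    (hx : ∀ i, v (x i) < 1) (hsum : ∀ k, v (levelSum G Z x k) = 0) {c : ι → ℕ}
    (hc : IsTwoCover G c) : v (monomialAt x c) = 0 := by
  obtain ⟨b₀, -, hb₀⟩ := hc.exists_isBasicTwoCover_le
  obtain ⟨b, hb, hmax⟩ := (basicTwoCovers G).exists_max_image (fun b => v (monomialAt x b))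
    ⟨b₀, mem_basicTwoCovers.2 hb₀⟩
  have hmax' : ∀ c, IsTwoCover G c → v (monomialAt x c) ≤ v (monomialAt x b) := by
    intro c hc
    obtain ⟨b', hb'c, hb'⟩ := hc.exists_isBasicTwoCover_le
    exact (map_monomialAt_le_of_le v hx hb'c).trans (hmax b' (mem_basicTwoCovers.2 hb'))
  have hzero := hZ.map_monomialAt_eq_zero_of_forall_le hx hsum (mem_basicTwoCovers.1 hb) hmax'
  exact le_zero_iff.1 (hzero ▸ hmax' c hc)

end Valuation

theorem IsMeetEmbedding.monomialAt_mem (hZ : IsMeetEmbedding G Z)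
    (hx : ∀ i, x i ∈ Ring.jacobson R) (P : Ideal R) [hP : P.IsPrime]
    (hsum : ∀ k, levelSum G Z x k ∈ P) {c : ι → ℕ} (hc : IsTwoCover G c) :
    monomialAt x c ∈ P := by
  have hjac : Ring.jacobson R ⊔ P ≠ ⊤ := by
    obtain ⟨m, hm, hPm⟩ := P.exists_le_maximal hP.ne_top
    exact ne_top_of_le_ne_top hm.ne_top (sup_le (Ring.jacobson_le_of_isMaximal m) hPm)
  obtain ⟨Γ₀, _, v, hv, hlt⟩ := exists_valuation_supp_eq P (Ring.jacobson R) hjac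
  rw [← hv, Valuation.mem_supp_iff]
  refine hZ.map_monomialAt_eq_zero (fun i => hlt _ (hx i)) (fun k => ?_) hc
  rw [← Valuation.mem_supp_iff, hv]
  exact hsum k

end LevelSums

section ArithmeticalRank

variable {ι α R R' : Type*} [CommRing R] [CommRing R'] {G : SimpleGraph ι} {x : ι → R}
  {I : Ideal R}

/-- The radical of `I` is that of the cover ideal `⋂ (x_i, x_j)`, the intersection being over the
edges of `G`. This is phrased through the primes containing the two ideals. -/
def CutsOutEdges (G : SimpleGraph ι) (x : ι → R) (I : Ideal R) : Prop :=
  ∀ P : Ideal R, P.IsPrime → (I ≤ P ↔ ∃ i j, G.Adj i j ∧ x i ∈ P ∧ x j ∈ P)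

theorem CutsOutEdges.map (hI : CutsOutEdges G x I) (f : R →+* R') :
    CutsOutEdges G (f ∘ x) (I.map f) := by
  intro P hP
  rw [Ideal.map_le_iff_le_comap, hI _ (hP.comap f)]
  rfl

theorem IsMeetEmbedding.ara_le [Finite ι] [DecidableEq α] {Z : (ι → ℕ) → Finset α}
    (hZ : IsMeetEmbedding G Z) (hI : CutsOutEdges G x I) (hx : ∀ i, x i ∈ Ring.jacobson R) {r : ℕ}
    (hr : ∀ c, IsBasicTwoCover G c → (Z c).card ≤ r) : ara I ≤ r + 1 := by
  have := Fintype.ofFinite ι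
  refine Nat.sInf_le ⟨fun k : Fin (r + 1) => levelSum G Z x k, ?_⟩
  rw [← PrimeSpectrum.zeroLocus_eq_iff]
  ext ⟨P, hP⟩
  change Ideal.span _ ≤ P ↔ I ≤ P
  rw [hI P hP, Ideal.span_le, Set.range_subset_iff]
  constructor
  · intro hlevel
    by_contra! hedge
    have hsum : ∀ k, levelSum G Z x k ∈ P := by
      intro k
      by_cases hk : k ≤ r
      · exact hlevel ⟨k, Nat.lt_succ_of_le hk⟩
      · refine P.sum_mem fun c hc => absurd (hr c ?_) ?_
        · exact mem_basicTwoCovers.1 (Finset.mem_filter.1 hc).1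
        · exact (Finset.mem_filter.1 hc).2 ▸ hk
    classical
    have hcover : IsTwoCover G fun i => if x i ∈ P then 0 else 2 := by
      intro i j hij
      have := hedge i j hij
      dsimp only
      split_ifs <;> first | omega | tauto
    obtain ⟨i, hi, hiP⟩ := (monomialAt_mem_iff P).1 (hZ.monomialAt_mem hx P hsum hcover)
    exact hi (if_pos hiP)
  · rintro ⟨i, j, hij, hi, hj⟩ k
    refine P.sum_mem fun c hc => (monomialAt_mem_iff P).2 ?_
    have := (mem_basicTwoCovers.1 (Finset.mem_filter.1 hc).1).isTwoCover hij
    by_cases hci : c i = 0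
    · exact ⟨j, by omega, hj⟩
    · exact ⟨i, hci, hi⟩

theorem CutsOutEdges.ara_le_vertexCoverNum_add_one [Finite ι] (hI : CutsOutEdges G x I)
    (hx : ∀ i, x i ∈ Ring.jacobson R) : (ara I : ℕ∞) ≤ G.vertexCoverNum + 1 := by
  classical
  obtain ⟨s, hcard, hs⟩ := G.vertexCoverNum_exists
  lift s to Finset ι using s.toFinite
  rw [← hcard, Set.encard_coe_eq_coe_finsetCard]
  exact_mod_cast (isMeetEmbedding_graph_ne_one hs).ara_le hI hx fun c _ =>
    (Finset.card_filter_le _ _).trans Finset.card_image_le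

theorem CutsOutEdges.ara_le_indepNum_add_one [Finite ι] (hI : CutsOutEdges G x I)
    (hx : ∀ i, x i ∈ Ring.jacobson R) : ara I ≤ G.indepNum + 1 := by
  have := Fintype.ofFinite ι
  classical
  refine (isMeetEmbedding_zeros G).ara_le hI hx fun c hc =>
    SimpleGraph.IsIndepSet.card_le_indepNum fun i hi j hj _ hij => ?_
  have := hc.isTwoCover hij
  simp only [Finset.coe_filter_univ, Set.mem_ofPred_eq] at hi hj
  omega

theorem indepNum_add_vertexCoverNum_le [Fintype ι] (G : SimpleGraph ι) :
    G.indepNum + G.vertexCoverNum ≤ Fintype.card ι := by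
  classical
  obtain ⟨s, hs⟩ := G.exists_isNIndepSet_indepNum
  have hcover := (SimpleGraph.isVertexCover_compl.2 hs.isIndepSet).vertexCoverNum_le
  rw [← Finset.coe_compl, Set.encard_coe_eq_coe_finsetCard] at hcover
  calc G.indepNum + G.vertexCoverNum ≤ (s.card + sᶜ.card : ℕ) := by
        rw [hs.card_eq, Nat.cast_add]
        gcongr
    _ = Fintype.card ι := by rw [Finset.card_add_card_compl]

theorem vertexCoverNum_eq_sInf_degree [Finite ι] (G : SimpleGraph ι) :
    G.vertexCoverNum = (sInf {m : ℕ | ∃ u : ι →₀ ℕ, G.IsVertexCover u.support ∧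
      m = u.sum fun _ e => e} : ℕ) := by
  classical
  obtain ⟨s, hcard, hs⟩ := G.vertexCoverNum_exists
  lift s to Finset ι using s.toFinite
  rw [Set.encard_coe_eq_coe_finsetCard] at hcard
  have hmem : s.card ∈ {m : ℕ | ∃ u : ι →₀ ℕ, G.IsVertexCover u.support ∧
      m = u.sum fun _ e => e} :=
    ⟨Multiset.toFinsupp s.val, by simpa using hs, (Multiset.toFinsupp_sum_eq s.val).symm⟩
  refine le_antisymm ?_ (hcard ▸ Nat.cast_le.2 (Nat.sInf_le hmem))
  obtain ⟨u, hu, hdeg⟩ := Nat.sInf_mem (Set.nonempty_of_mem hmem)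
  rw [hdeg]
  refine hu.vertexCoverNum_le.trans ?_
  rw [Set.encard_coe_eq_coe_finsetCard, Finset.card_eq_sum_ones, Nat.cast_le]
  exact Finset.sum_le_sum fun i hi => Nat.one_le_iff_ne_zero.2 (Finsupp.mem_support_iff.1 hi)

end ArithmeticalRank

section VariableIdeals

variable {σ K : Type*} [CommRing K] [IsDomain K]

theorem isPrime_span_X_image (T : Set σ) :
    (Ideal.span (X '' T : Set (MvPolynomial σ K))).IsPrime := by
  classical
  let I : Ideal (MvPolynomial σ K) := Ideal.span (X '' T)
  let g : MvPolynomial σ K →ₐ[K] MvPolynomial σ K := aeval fun i => if i ∈ T then 0 else X i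
  have hg : (Ideal.Quotient.mkₐ K I).comp g = Ideal.Quotient.mkₐ K I := by
    ext i
    by_cases hi : i ∈ T
    · have : Ideal.Quotient.mk I (X i) = 0 :=
        Ideal.Quotient.eq_zero_iff_mem.2 (Ideal.subset_span ⟨i, hi, rfl⟩)
      simp [g, hi, this]
    · simp [g, hi]
  have hker : I = RingHom.ker g := by
    refine le_antisymm (Ideal.span_le.2 ?_) fun p hp => ?_
    · rintro _ ⟨i, hi, rfl⟩
      simp [RingHom.mem_ker, g, hi]
    · rw [← Ideal.Quotient.eq_zero_iff_mem, ← Ideal.Quotient.mkₐ_eq_mk K, ← hg,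
        AlgHom.comp_apply, RingHom.mem_ker.1 hp, map_zero]
  change I.IsPrime
  rw [hker]
  exact RingHom.ker_isPrime g

theorem X_mem_span_X_image {T : Set σ} {i : σ} :
    (X i : MvPolynomial σ K) ∈ Ideal.span (X '' T) ↔ i ∈ T := by
  simp [mem_ideal_span_X_image, support_X, Finsupp.single_apply_ne_zero]

theorem card_le_height_span_X_image (T : Finset σ) :
    (T.card : ℕ∞) ≤ (Ideal.span (X '' (T : Set σ) : Set (MvPolynomial σ K))).height := by
  classical
  induction T using Finset.induction_on with
  | empty => simp
  | insert a T ha ih =>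
    have := isPrime_span_X_image (K := K) (T : Set σ)
    have := isPrime_span_X_image (K := K) (↑(insert a T) : Set σ)
    have hlt : Ideal.span (X '' (T : Set σ) : Set (MvPolynomial σ K)) <
        Ideal.span (X '' (↑(insert a T) : Set σ)) :=
      SetLike.lt_iff_le_and_exists.2 ⟨Ideal.span_mono (Set.image_mono (by simp)), X a,
        X_mem_span_X_image.2 (by simp), fun h => ha (X_mem_span_X_image.1 h)⟩
    rw [Finset.card_insert_of_notMem ha, Nat.cast_add, Nat.cast_one]
    exact (add_le_add_left ih 1).trans (Ideal.height_add_one_le_of_lt_of_isPrime hlt)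

theorem height_span_X_image [IsNoetherianRing K] [Finite σ] (T : Finset σ) :
    (Ideal.span (X '' (T : Set σ) : Set (MvPolynomial σ K))).height = T.card := by
  classical
  refine le_antisymm ?_ (card_le_height_span_X_image T)
  have := isPrime_span_X_image (K := K) (T : Set σ)
  have hmem : Ideal.span (X '' (T : Set σ)) ∈
      (Ideal.span (SetLike.coe (T.image X) : Set (MvPolynomial σ K))).minimalPrimes := by
    rw [Finset.coe_image, Ideal.minimalPrimes_eq_subsingleton_self, Set.mem_singleton_iff]
  exact (Ideal.height_le_card_of_mem_minimalPrimes_span_finset hmem).trans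
    (Nat.cast_le.2 Finset.card_image_le)

end VariableIdeals

section SquarefreeIdeals

variable {σ K : Type*} [CommRing K]

/-- The graph whose edges are the pairs of distinct vertices meeting every member of `𝒮`. -/
def transversalGraph (𝒮 : Set (Finset σ)) : SimpleGraph σ where
  Adj i j := i ≠ j ∧ ∀ s ∈ 𝒮, i ∈ s ∨ j ∈ s
  symm := ⟨fun _ _ h => ⟨h.1.symm, fun s hs => (h.2 s hs).symm⟩⟩
  loopless := ⟨fun _ h => h.1 rfl⟩

variable (K) in
/-- The square-free monomial ideal generated by the products of the members of `𝒮`. -/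
noncomputable def squarefreeIdeal (𝒮 : Set (Finset σ)) : Ideal (MvPolynomial σ K) :=
  Ideal.span ((fun s : Finset σ => ∏ i ∈ s, X i) '' 𝒮)

variable {𝒮 : Set (Finset σ)}

theorem squarefreeIdeal_le_iff {P : Ideal (MvPolynomial σ K)} (hP : P.IsPrime) :
    squarefreeIdeal K 𝒮 ≤ P ↔ ∀ s ∈ 𝒮, ∃ i ∈ s, X i ∈ P := by
  rw [squarefreeIdeal, Ideal.span_le, Set.image_subset_iff]
  exact forall₂_congr fun s _ => hP.prod_mem_iff

theorem monomial_mem_squarefreeIdeal_iff [Nontrivial K] {u : σ →₀ ℕ} :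
    monomial u (1 : K) ∈ squarefreeIdeal K 𝒮 ↔ ∃ s ∈ 𝒮, s ⊆ u.support := by
  classical
  have hprod : (fun s : Finset σ => ∏ i ∈ s, (X i : MvPolynomial σ K)) =
      (fun e => monomial e 1) ∘ fun s => ∑ i ∈ s, Finsupp.single i 1 :=
    funext fun s => (monomial_sum_one s _).symm
  have hle : ∀ s : Finset σ, ∑ i ∈ s, Finsupp.single i 1 ≤ u ↔ s ⊆ u.support := by
    intro s
    simp only [Finsupp.le_def, Finsupp.finsetSum_apply, Finsupp.single_apply,
      Finset.sum_ite_eq', Finset.subset_iff, Finsupp.mem_support_iff]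
    refine forall_congr' fun i => ?_
    split_ifs with hi <;> simp [hi, Nat.one_le_iff_ne_zero]
  rw [squarefreeIdeal, hprod, Set.image_comp, mem_ideal_span_monomial_image]
  simp [support_monomial, hle]

variable [IsDomain K]

theorem span_X_image_eq_of_mem_minimalPrimes {Q : Ideal (MvPolynomial σ K)}
    (hQ : Q ∈ (squarefreeIdeal K 𝒮).minimalPrimes) : Ideal.span (X '' {i | X i ∈ Q}) = Q := by
  have hle : Ideal.span (X '' {i | X i ∈ Q}) ≤ Q := Ideal.span_le.2 (Set.image_subset_iff.2 le_rfl)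
  refine hle.antisymm (hQ.2 ⟨isPrime_span_X_image _, ?_⟩ hle)
  rw [squarefreeIdeal_le_iff (isPrime_span_X_image _)]
  simpa only [X_mem_span_X_image, Set.mem_ofPred_eq] using (squarefreeIdeal_le_iff hQ.1.1).1 hQ.1.2

theorem CutsOutEdges.isVertexCover_iff
    (h : CutsOutEdges (transversalGraph 𝒮) X (squarefreeIdeal K 𝒮)) {D : Set σ} :
    (transversalGraph 𝒮).IsVertexCover D ↔ ∃ s ∈ 𝒮, ↑s ⊆ D := by
  refine ⟨fun hD => ?_, fun ⟨s, hs, hsD⟩ i j hij => (hij.2 s hs).imp (@hsD i) (@hsD j)⟩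
  have hnle : ¬ squarefreeIdeal K 𝒮 ≤ Ideal.span (X '' Dᶜ) := by
    rw [h _ (isPrime_span_X_image _)]
    rintro ⟨i, j, hij, hi, hj⟩
    exact (hD hij).elim (X_mem_span_X_image.1 hi) (X_mem_span_X_image.1 hj)
  rw [squarefreeIdeal_le_iff (isPrime_span_X_image _)] at hnle
  simpa [X_mem_span_X_image, Set.subset_def] using hnle

variable [IsNoetherianRing K]

theorem exists_adj_of_mem_minimalPrimes [Finite σ] {Q : Ideal (MvPolynomial σ K)}
    (hQ : Q ∈ (squarefreeIdeal K 𝒮).minimalPrimes) (hheight : Q.height = 2) :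
    ∃ i j, (transversalGraph 𝒮).Adj i j ∧ X i ∈ Q ∧ X j ∈ Q := by
  have hspan := span_X_image_eq_of_mem_minimalPrimes hQ
  obtain ⟨T, hT⟩ := {i | (X i : MvPolynomial σ K) ∈ Q}.toFinite.exists_finset_coe
  have hcard : T.card = 2 := by
    rw [← hspan, ← hT, height_span_X_image] at hheight
    exact_mod_cast hheight
  classical
  obtain ⟨i, j, hij, rfl⟩ := Finset.card_eq_two.1 hcard
  have hvar : ∀ k, X k ∈ Q ↔ k = i ∨ k = j := fun k => by
    simpa using (Set.ext_iff.1 hT k).symm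
  refine ⟨i, j, ⟨hij, fun s hs => ?_⟩, (hvar i).2 (.inl rfl), (hvar j).2 (.inr rfl)⟩
  obtain ⟨k, hk, hkQ⟩ := (squarefreeIdeal_le_iff hQ.1.1).1 hQ.1.2 s hs
  rcases (hvar k).1 hkQ with rfl | rfl
  · exact .inl hk
  · exact .inr hk

theorem cutsOutEdges_squarefreeIdeal [Finite σ]
    (hpure : ∀ Q ∈ (squarefreeIdeal K 𝒮).minimalPrimes, Q.height = 2) :
    CutsOutEdges (transversalGraph 𝒮) X (squarefreeIdeal K 𝒮) := by
  refine fun P hP => ⟨fun hle => ?_, ?_⟩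
  · obtain ⟨Q, hQ, hQP⟩ := Ideal.exists_minimalPrimes_le hle
    obtain ⟨i, j, hij, hi, hj⟩ := exists_adj_of_mem_minimalPrimes hQ (hpure Q hQ)
    exact ⟨i, j, hij, hQP hi, hQP hj⟩
  · rintro ⟨i, j, hij, hi, hj⟩
    exact (squarefreeIdeal_le_iff hP).2 fun s hs =>
      (hij.2 s hs).elim (fun his => ⟨i, his, hi⟩) fun hjs => ⟨j, hjs, hj⟩

end SquarefreeIdeals

theorem algebraMap_mem_jacobson_atPrime {R : Type*} [CommRing R] {P : Ideal R} [P.IsPrime] {a : R}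
    (ha : a ∈ P) :
    algebraMap R (Localization.AtPrime P) a ∈ Ring.jacobson (Localization.AtPrime P) := by
  rwa [IsLocalRing.ringJacobson_eq_maximalIdeal, IsLocalization.AtPrime.to_map_mem_maximal_iff _ P]

theorem ara_squarefree_pure_codim_two_general {σ K R : Type*} [Fintype σ] [CommRing K] [IsDomain K]
    [IsNoetherianRing K] [CommRing R] (f : MvPolynomial σ K →+* R)
    (hf : ∀ i, f (X i) ∈ Ring.jacobson R) (I : Ideal (MvPolynomial σ K))
    (hsqfree : ∃ 𝒮 : Set (Finset σ),
      I = Ideal.span ((fun s : Finset σ => ∏ i ∈ s, X i) '' 𝒮))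
    (hpure : ∀ P ∈ I.minimalPrimes, P.height = 2) (d : ℕ)
    (hd : d = sInf {m : ℕ | ∃ u : σ →₀ ℕ, monomial u (1 : K) ∈ I ∧ m = u.sum fun _ e => e}) :
    ara (I.map f) ≤ min (d + 1) (Fintype.card σ - d + 1) := by
  obtain ⟨𝒮, hI : I = squarefreeIdeal K 𝒮⟩ := hsqfree
  subst hI
  have hcuts := cutsOutEdges_squarefreeIdeal hpure
  have hcoverNum : (transversalGraph 𝒮).vertexCoverNum = d := by
    rw [hd, vertexCoverNum_eq_sInf_degree]
    simp only [monomial_mem_squarefreeIdeal_iff, hcuts.isVertexCover_iff, Finset.coe_subset]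
  have hcover := (hcuts.map f).ara_le_vertexCoverNum_add_one hf
  have hindep := (hcuts.map f).ara_le_indepNum_add_one hf
  have hgallai := indepNum_add_vertexCoverNum_le (transversalGraph 𝒮)
  rw [hcoverNum] at hcover hgallai
  norm_cast at hcover hgallai
  omega

/-- Let `K` be an infinite field and `I ⊆ S = K[x_1,…,x_n]` a square-free
monomial ideal of pure codimension 2 (every minimal prime of `I` has height 2), and let `d`
be the minimum degree of a nonzero monomial in `I`. Then
`ara(I S_m) ≤ min {d + 1, n − d + 1}`. -/
theorem ara_squarefree_pure_codim_two (K : Type*) [Field K] [Infinite K] {n : ℕ}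
    (I : Ideal (MvPolynomial (Fin n) K))
    (hsqfree : ∃ 𝒮 : Set (Finset (Fin n)),
      I = Ideal.span ((fun s : Finset (Fin n) => ∏ i ∈ s, MvPolynomial.X i) '' 𝒮))
    (hpure : ∀ P : Ideal (MvPolynomial (Fin n) K), ∀ hP : P ∈ I.minimalPrimes,
      Order.height (⟨P, hP.1.1⟩ : PrimeSpectrum (MvPolynomial (Fin n) K)) = 2)
    (d : ℕ)
    (hd : d = sInf {m : ℕ | ∃ u : Fin n →₀ ℕ,
      (MvPolynomial.monomial u (1 : K)) ∈ I ∧ m = u.sum fun _ e => e}) :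
    ara (I.map (algebraMap (MvPolynomial (Fin n) K) (SLoc K n))) ≤
      min (d + 1) (n - d + 1) := by
  simpa only [Fintype.card_fin] using ara_squarefree_pure_codim_two_general _
    (fun i => algebraMap_mem_jacobson_atPrime (P := mIdeal K n) (Ideal.subset_span ⟨i, rfl⟩)) I
    hsqfree (fun P hP => (PrimeSpectrum.height_eq_orderHeight ⟨P, hP.1.1⟩).trans (hpure P hP)) d hd
end
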